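/- arXiv:1801.02162 — 2 statements merged into one kernel-verified Lean document; each statement's English description precedes it below -/
import Mathlib

section
/- Let P be a convex polygon with no vertex of interior angle less than ω, for ω ∈ (0, π). Then the sum of the angular measures of all circular arcs constituting the ω-cloud of P equals 4π. -/
open EuclideanGeometry Real Set
open scoped Classical

noncomputable section

abbrev Plane := EuclideanSpace ℝ (Fin 2)

/-- The unit vector in direction `θ`. -/
def unitVec (θ : ℝ) : Plane := (WithLp.equiv 2 (Fin 2 → ℝ)).symm ![Real.cos θ, Real.sin θ]

/-- The closed ray from `x` in direction `d`. -/
def ray (x d : Plane) : Set Plane := {y | ∃ t : ℝ, 0 ≤ t ∧ y = x + t • d}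

/-- The closed wedge with apex `x` bounded by the rays in directions `d₁` and `d₂`. -/
def wedgeSet (x d₁ d₂ : Plane) : Set Plane :=
  {y | ∃ s t : ℝ, 0 ≤ s ∧ 0 ≤ t ∧ y = x + s • d₁ + t • d₂}

/-- The wedge with apex `x`, arm directions `d₁`, `d₂` (unit vectors at angle `ω`),
is a minimal `ω`-wedge for `P`: it contains `P` and both arms touch `P`. -/
def IsMinWedge (P : Set Plane) (ω : ℝ) (x d₁ d₂ : Plane) : Prop :=
  ‖d₁‖ = 1 ∧ ‖d₂‖ = 1 ∧ InnerProductGeometry.angle d₁ d₂ = ω ∧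
  P ⊆ wedgeSet x d₁ d₂ ∧ (P ∩ ray x d₁).Nonempty ∧ (P ∩ ray x d₂).Nonempty

/-- The `ω`-cloud of `P`: the locus of apices of all minimal `ω`-wedges. -/
def omegaCloud (P : Set Plane) (ω : ℝ) : Set Plane := {x | ∃ d₁ d₂, IsMinWedge P ω x d₁ d₂}

/-- `V` is the vertex set of a convex polygon: at least 3 points, in strictly convex position. -/
def IsConvexPolygon (V : Finset Plane) : Prop :=
  3 ≤ V.card ∧ ∀ v ∈ V, v ∉ convexHull ℝ ((V.erase v : Finset Plane) : Set Plane)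

/-- The interior angle of a convex body `P` at a boundary point `v`, defined as the
supremum of angles `∠ a v b` over `a, b ∈ P \ {v}`. -/
def interiorAngle (P : Set Plane) (v : Plane) : ℝ :=
  sSup {θ : ℝ | ∃ a ∈ P, ∃ b ∈ P, a ≠ v ∧ b ≠ v ∧ θ = EuclideanGeometry.angle a v b}

/-- A circular arc, given by center, radius, starting angle and angular extent. -/
structure CircArc where
  center : Plane
  radius : ℝ
  start : ℝ
  delta : ℝ

/-- The (closed) point set of a circular arc. -/
def CircArc.points (A : CircArc) : Set Plane :=
  {p | ∃ θ ∈ Set.Icc A.start (A.start + A.delta), p = A.center + A.radius • unitVec θ}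

/-- The relative interior of a circular arc. -/
def CircArc.intPoints (A : CircArc) : Set Plane :=
  {p | ∃ θ ∈ Set.Ioo A.start (A.start + A.delta), p = A.center + A.radius • unitVec θ}

/-- The start point of an arc when it is traversed clockwise. -/
def CircArc.cwStart (A : CircArc) : Plane := A.center + A.radius • unitVec (A.start + A.delta)

/-- The end point of an arc when it is traversed clockwise. -/
def CircArc.cwEnd (A : CircArc) : Plane := A.center + A.radius • unitVec A.start

/-- The set of (bisector) directions of minimal `ω`-wedges of `P` with apex `x`. -/
def wedgeDirs (P : Set Plane) (ω : ℝ) (x : Plane) : Set Plane :=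
  {d | ∃ d₁ d₂, IsMinWedge P ω x d₁ d₂ ∧ d = (‖d₁ + d₂‖)⁻¹ • (d₁ + d₂)}

/-- On every interior point of the arc `A`, the minimal `ω`-wedge of `P` touches `P`
at `p` (with one arm) and `q` (with the other arm). -/
def ContactPair (P : Set Plane) (ω : ℝ) (A : CircArc) (p q : Plane) : Prop :=
  ∀ x ∈ A.intPoints, ∃ d₁ d₂, IsMinWedge P ω x d₁ d₂ ∧ p ∈ ray x d₁ ∧ q ∈ ray x d₂

/-! The minimal `ω`-wedges of `P` are indexed by the direction `θ` of their first arm, so that the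
cloud is a closed curve `θ ↦ apex P ω θ` on a circle of length `2π`. If two different wedges had the
same apex `x`, then `P` would lie in their intersection, and `x` would be a contact vertex at which
`P` has an angle less than `ω`; hence the curve is injective. As long as the two contact vertices do
not change, the apex sees them under the constant angle `ω` and, by the inscribed angle theorem,
runs along a circle at angular speed two. An arc of measure `δ` of the cloud therefore comes from an
interval of directions of length `δ / 2`. These intervals tile the circle of directions, so that
`∑ δ / 2 = 2π`. -/

section Direction

open scoped InnerProductSpace

@[simp] lemma unitVec_apply_zero (θ : ℝ) : unitVec θ 0 = cos θ := rfl

@[simp] lemma unitVec_apply_one (θ : ℝ) : unitVec θ 1 = sin θ := rfl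

lemma Plane.ext {x y : Plane} (h₀ : x 0 = y 0) (h₁ : x 1 = y 1) : x = y := by
  ext i
  fin_cases i <;> assumption

@[fun_prop]
lemma continuous_unitVec : Continuous unitVec := by
  refine (PiLp.continuous_toLp 2 _).comp (continuous_pi fun i ↦ ?_)
  fin_cases i
  exacts [continuous_cos, continuous_sin]

lemma inner_unitVec (α : ℝ) (v : Plane) : ⟪unitVec α, v⟫_ℝ = cos α * v 0 + sin α * v 1 := by
  simp [PiLp.inner_apply, Fin.sum_univ_two, mul_comm]

lemma inner_unitVec_unitVec (α β : ℝ) : ⟪unitVec α, unitVec β⟫_ℝ = cos (α - β) := by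
  rw [inner_unitVec, cos_sub, unitVec_apply_zero, unitVec_apply_one]

lemma inner_unitVec_sub_pi_div_two (θ γ : ℝ) :
    ⟪unitVec (θ - π / 2), unitVec γ⟫_ℝ = sin (θ - γ) := by
  rw [inner_unitVec_unitVec, sub_right_comm, cos_sub_pi_div_two]

lemma inner_unitVec_add_pi_div_two (θ γ : ℝ) :
    ⟪unitVec (θ + π / 2), unitVec γ⟫_ℝ = sin (γ - θ) := by
  rw [inner_unitVec_unitVec, add_sub_right_comm, cos_add_pi_div_two, ← sin_neg, neg_sub]

@[simp] lemma norm_unitVec (θ : ℝ) : ‖unitVec θ‖ = 1 := by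
  rw [← sq_eq_sq₀ (norm_nonneg _) zero_le_one, ← real_inner_self_eq_norm_sq,
    inner_unitVec_unitVec, sub_self, cos_zero, one_pow]

lemma angle_unitVec_unitVec (α β : ℝ) :
    InnerProductGeometry.angle (unitVec α) (unitVec β) = arccos (cos (α - β)) := by
  simp [InnerProductGeometry.angle, inner_unitVec_unitVec]

lemma angle_unitVec_unitVec_of_abs_le {α β : ℝ} (h : |α - β| ≤ π) :
    InnerProductGeometry.angle (unitVec α) (unitVec β) = |α - β| := by
  rw [angle_unitVec_unitVec, ← cos_abs, arccos_cos (abs_nonneg _) h]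

lemma periodic_unitVec : Function.Periodic unitVec (2 * π) := fun θ ↦
  Plane.ext (cos_add_two_pi θ) (sin_add_two_pi θ)

lemma unitVec_eq_unitVec_iff {α β : ℝ} :
    unitVec α = unitVec β ↔ ∃ k : ℤ, α = β + k * (2 * π) := by
  constructor
  · intro h
    have h₀ : cos α = cos β := congrArg (· 0) h
    have h₁ : sin α = sin β := congrArg (· 1) h
    obtain ⟨k, hk⟩ := Real.Angle.angle_eq_iff_two_pi_dvd_sub.mp (Real.Angle.cos_sin_inj h₀ h₁)
    exact ⟨k, by linarith⟩
  · rintro ⟨k, rfl⟩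
    exact periodic_unitVec.int_mul k β

lemma eq_of_unitVec_eq_of_abs_sub_lt {α β : ℝ} (h : unitVec α = unitVec β)
    (hlt : |α - β| < 2 * π) : α = β := by
  obtain ⟨k, rfl⟩ := unitVec_eq_unitVec_iff.mp h
  have hk : |(k : ℝ)| < 1 := by
    rw [add_sub_cancel_left, abs_mul, abs_of_pos two_pi_pos] at hlt
    exact (mul_lt_iff_lt_one_left two_pi_pos).mp hlt
  have hk₀ : k = 0 := Int.abs_lt_one_iff.mp (mod_cast hk)
  simp [hk₀]

lemma exists_eq_smul_unitVec (v : Plane) : ∃ r θ : ℝ, 0 ≤ r ∧ v = r • unitVec θ := by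
  refine ⟨‖(⟨v 0, v 1⟩ : ℂ)‖, Complex.arg ⟨v 0, v 1⟩, norm_nonneg _, Plane.ext ?_ ?_⟩
  · simp [Complex.norm_mul_cos_arg]
  · simp [Complex.norm_mul_sin_arg]

lemma exists_unitVec_eq_of_norm_eq_one {v : Plane} (hv : ‖v‖ = 1) : ∃ θ, v = unitVec θ := by
  obtain ⟨r, θ, hr, rfl⟩ := exists_eq_smul_unitVec v
  have hr₁ : r = 1 := by simpa [norm_smul, abs_of_nonneg hr] using hv
  exact ⟨θ, by rw [hr₁, one_smul]⟩

lemma exists_mem_Ioc_unitVec_eq (a θ : ℝ) : ∃ γ ∈ Ioc a (a + 2 * π), unitVec γ = unitVec θ :=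
  ⟨toIocMod two_pi_pos a θ, toIocMod_mem_Ioc two_pi_pos a θ,
    unitVec_eq_unitVec_iff.mpr ⟨-toIocDiv two_pi_pos a θ, by
      have := toIocMod_add_toIocDiv_zsmul two_pi_pos a θ
      rw [zsmul_eq_mul] at this
      push_cast
      linarith⟩⟩

lemma cos_smul_unitVec (α β : ℝ) :
    cos α • unitVec β = (1 / 2 : ℝ) • unitVec (β + α) + (1 / 2 : ℝ) • unitVec (β - α) := by
  apply Plane.ext
  · simp only [PiLp.smul_apply, unitVec_apply_zero, smul_eq_mul, PiLp.add_apply, cos_add, cos_sub]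
    ring
  · simp only [PiLp.smul_apply, unitVec_apply_one, smul_eq_mul, PiLp.add_apply, sin_add, sin_sub]
    ring

lemma exists_smul_unitVec_add_smul_unitVec (a b α β : ℝ) :
    ∃ ρ κ : ℝ, 0 ≤ ρ ∧
      ∀ θ, a • unitVec (θ + α) + b • unitVec (θ + β) = ρ • unitVec (θ + κ) := by
  obtain ⟨ρ, κ, hρ, h⟩ := exists_eq_smul_unitVec (a • unitVec α + b • unitVec β)
  have h₀ : a * cos α + b * cos β = ρ * cos κ := congrArg (· 0) h
  have h₁ : a * sin α + b * sin β = ρ * sin κ := congrArg (· 1) h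
  refine ⟨ρ, κ, hρ, fun θ ↦ Plane.ext ?_ ?_⟩
  · simp only [PiLp.add_apply, PiLp.smul_apply, unitVec_apply_zero, smul_eq_mul, cos_add]
    linear_combination cos θ * h₀ - sin θ * h₁
  · simp only [PiLp.add_apply, PiLp.smul_apply, unitVec_apply_one, smul_eq_mul, sin_add]
    linear_combination sin θ * h₀ + cos θ * h₁

/-- The intersection of the lines `⟪unitVec (θ - π / 2), x⟫ = a` and
`⟪unitVec (θ + ω + π / 2), x⟫ = b`. These lines have directions `θ` and `θ + ω`, and their normals
point out of the wedge with arms in these two directions. -/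
def lineInter (ω θ a b : ℝ) : Plane :=
  (-b / sin ω) • unitVec θ + (-a / sin ω) • unitVec (θ + ω)

lemma inner_normal_left (ω θ s t : ℝ) :
    ⟪unitVec (θ - π / 2), s • unitVec θ + t • unitVec (θ + ω)⟫_ℝ = -t * sin ω := by
  simp [inner_add_right, real_inner_smul_right, inner_unitVec_sub_pi_div_two]

lemma inner_normal_right (ω θ s t : ℝ) :
    ⟪unitVec (θ + ω + π / 2), s • unitVec θ + t • unitVec (θ + ω)⟫_ℝ = -s * sin ω := by
  simp [inner_add_right, real_inner_smul_right, inner_unitVec_add_pi_div_two]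

variable {ω θ : ℝ}

lemma lineInter_inner (hω : sin ω ≠ 0) (x : Plane) :
    lineInter ω θ ⟪unitVec (θ - π / 2), x⟫_ℝ ⟪unitVec (θ + ω + π / 2), x⟫_ℝ = x := by
  have hsq := sin_sq_add_cos_sq θ
  apply Plane.ext
  · simp only [lineInter, inner_unitVec, cos_sub_pi_div_two, sin_sub_pi_div_two, cos_add, sin_add,
      cos_pi_div_two, sin_pi_div_two, PiLp.add_apply, PiLp.smul_apply, unitVec_apply_zero,
      smul_eq_mul]
    field_simp
    linear_combination sin ω * x 0 * hsq
  · simp only [lineInter, inner_unitVec, cos_sub_pi_div_two, sin_sub_pi_div_two, cos_add, sin_add,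
      cos_pi_div_two, sin_pi_div_two, PiLp.add_apply, PiLp.smul_apply, unitVec_apply_one,
      smul_eq_mul]
    field_simp
    linear_combination sin ω * x 1 * hsq

lemma eq_lineInter_iff (hω : sin ω ≠ 0) {x : Plane} {a b : ℝ} :
    x = lineInter ω θ a b ↔
      ⟪unitVec (θ - π / 2), x⟫_ℝ = a ∧ ⟪unitVec (θ + ω + π / 2), x⟫_ℝ = b := by
  constructor
  · rintro rfl
    rw [lineInter, inner_normal_left, inner_normal_right, neg_div, neg_neg, neg_div, neg_neg,
      div_mul_cancel₀ _ hω, div_mul_cancel₀ _ hω]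
    exact ⟨rfl, rfl⟩
  · rintro ⟨rfl, rfl⟩
    rw [lineInter_inner hω]

/-- By the product-to-sum formula, each of the two terms of `lineInter` is a constant plus a vector
rotating at speed two. -/
lemma exists_lineInter_inner_eq (ω : ℝ) (p q : Plane) :
    ∃ (c : Plane) (ρ κ : ℝ), 0 ≤ ρ ∧ ∀ θ,
      lineInter ω θ ⟪unitVec (θ - π / 2), p⟫_ℝ ⟪unitVec (θ + ω + π / 2), q⟫_ℝ =
        c + ρ • unitVec (2 * θ + κ) := by
  obtain ⟨r, δ, -, rfl⟩ := exists_eq_smul_unitVec p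
  obtain ⟨s, ε, -, rfl⟩ := exists_eq_smul_unitVec q
  obtain ⟨ρ, κ, hρ, hsum⟩ := exists_smul_unitVec_add_smul_unitVec
    (-s / sin ω * (1 / 2)) (-r / sin ω * (1 / 2)) (ω + π / 2 - ε) (ω - π / 2 - δ)
  refine ⟨(-s / sin ω * (1 / 2)) • unitVec (-(ω + π / 2 - ε)) +
    (-r / sin ω * (1 / 2)) • unitVec (ω + π / 2 + δ), ρ, κ, hρ, fun θ ↦ ?_⟩
  rw [← hsum, lineInter, real_inner_smul_right, real_inner_smul_right, inner_unitVec_unitVec,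
    inner_unitVec_unitVec, neg_mul_eq_neg_mul, neg_mul_eq_neg_mul, mul_div_right_comm,
    mul_div_right_comm, mul_smul, mul_smul, cos_smul_unitVec, cos_smul_unitVec]
  simp only [smul_add, smul_smul]
  ring_nf
  abel

end Direction

section Wedge

open scoped InnerProductSpace

variable {P : Set Plane} {ω θ s : ℝ} {x y : Plane}

lemma IsMinWedge.symm {d₁ d₂ : Plane} (h : IsMinWedge P ω x d₁ d₂) : IsMinWedge P ω x d₂ d₁ := by
  obtain ⟨h₁, h₂, hangle, hsub, hray₁, hray₂⟩ := h
  refine ⟨h₂, h₁, by rwa [InnerProductGeometry.angle_comm], fun y hy ↦ ?_, hray₂, hray₁⟩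
  obtain ⟨s, t, hs, ht, rfl⟩ := hsub hy
  exact ⟨t, s, ht, hs, add_right_comm _ _ _⟩

lemma mem_wedgeSet_unitVec_iff (hω : 0 < sin ω) :
    y ∈ wedgeSet x (unitVec θ) (unitVec (θ + ω)) ↔
      ⟪unitVec (θ - π / 2), y⟫_ℝ ≤ ⟪unitVec (θ - π / 2), x⟫_ℝ ∧
        ⟪unitVec (θ + ω + π / 2), y⟫_ℝ ≤ ⟪unitVec (θ + ω + π / 2), x⟫_ℝ := by
  constructor
  · rintro ⟨s, t, hs, ht, rfl⟩
    rw [add_assoc x, inner_add_right _ x, inner_add_right _ x, inner_normal_left,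
      inner_normal_right]
    constructor <;> nlinarith
  · rintro ⟨h₁, h₂⟩
    refine ⟨-⟪unitVec (θ + ω + π / 2), y - x⟫_ℝ / sin ω, -⟪unitVec (θ - π / 2), y - x⟫_ℝ / sin ω,
      ?_, ?_, ?_⟩
    · exact div_nonneg (by rw [inner_sub_right]; linarith) hω.le
    · exact div_nonneg (by rw [inner_sub_right]; linarith) hω.le
    · have h := lineInter_inner hω.ne' (θ := θ) (y - x)
      rw [lineInter] at h
      rw [add_assoc x, h, add_sub_cancel]

lemma mem_ray_left_iff (hω : 0 < sin ω) :
    y ∈ ray x (unitVec θ) ↔ y ∈ wedgeSet x (unitVec θ) (unitVec (θ + ω)) ∧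
      ⟪unitVec (θ - π / 2), y⟫_ℝ = ⟪unitVec (θ - π / 2), x⟫_ℝ := by
  constructor
  · rintro ⟨s, hs, rfl⟩
    exact ⟨⟨s, 0, hs, le_rfl, by simp⟩,
      by simp [inner_add_right, real_inner_smul_right, inner_unitVec_sub_pi_div_two]⟩
  · rintro ⟨⟨s, t, hs, -, rfl⟩, h⟩
    rw [add_assoc x, inner_add_right _ x, inner_normal_left, add_eq_left, neg_mul, neg_eq_zero] at h
    exact ⟨s, hs, by simp [(mul_eq_zero.mp h).resolve_right hω.ne']⟩

lemma mem_ray_right_iff (hω : 0 < sin ω) :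
    y ∈ ray x (unitVec (θ + ω)) ↔ y ∈ wedgeSet x (unitVec θ) (unitVec (θ + ω)) ∧
      ⟪unitVec (θ + ω + π / 2), y⟫_ℝ = ⟪unitVec (θ + ω + π / 2), x⟫_ℝ := by
  constructor
  · rintro ⟨t, ht, rfl⟩
    exact ⟨⟨0, t, le_rfl, ht, by simp⟩,
      by simp [inner_add_right, real_inner_smul_right, inner_unitVec_add_pi_div_two]⟩
  · rintro ⟨⟨s, t, -, ht, rfl⟩, h⟩
    rw [add_assoc x, inner_add_right _ x, inner_normal_right, add_eq_left, neg_mul,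
      neg_eq_zero] at h
    exact ⟨t, ht, by simp [(mul_eq_zero.mp h).resolve_right hω.ne']⟩

lemma isMinWedge_unitVec_iff (hω : ω ∈ Ioo 0 π) :
    IsMinWedge P ω x (unitVec θ) (unitVec (θ + ω)) ↔
      IsGreatest ((⟪unitVec (θ - π / 2), ·⟫_ℝ) '' P) ⟪unitVec (θ - π / 2), x⟫_ℝ ∧
        IsGreatest ((⟪unitVec (θ + ω + π / 2), ·⟫_ℝ) '' P) ⟪unitVec (θ + ω + π / 2), x⟫_ℝ := by
  have hsin : 0 < sin ω := sin_pos_of_mem_Ioo hω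
  constructor
  · rintro ⟨-, -, -, hsub, ⟨p, hp, hpx⟩, ⟨q, hq, hqx⟩⟩
    refine ⟨⟨⟨p, hp, ((mem_ray_left_iff hsin).mp hpx).2⟩, forall_mem_image.mpr fun y hy ↦ ?_⟩,
      ⟨⟨q, hq, ((mem_ray_right_iff hsin).mp hqx).2⟩, forall_mem_image.mpr fun y hy ↦ ?_⟩⟩
    · exact ((mem_wedgeSet_unitVec_iff hsin).mp (hsub hy)).1
    · exact ((mem_wedgeSet_unitVec_iff hsin).mp (hsub hy)).2
  · rintro ⟨⟨⟨p, hp, hpx⟩, hleft⟩, ⟨⟨q, hq, hqx⟩, hright⟩⟩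
    have hsub : P ⊆ wedgeSet x (unitVec θ) (unitVec (θ + ω)) := fun y hy ↦
      (mem_wedgeSet_unitVec_iff hsin).mpr
        ⟨hleft (mem_image_of_mem _ hy), hright (mem_image_of_mem _ hy)⟩
    have hangle : InnerProductGeometry.angle (unitVec θ) (unitVec (θ + ω)) = ω := by
      rw [angle_unitVec_unitVec, sub_add_cancel_left, cos_neg, arccos_cos hω.1.le hω.2.le]
    exact ⟨norm_unitVec _, norm_unitVec _, hangle, hsub,
      ⟨p, hp, (mem_ray_left_iff hsin).mpr ⟨hsub hp, hpx⟩⟩,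
      ⟨q, hq, (mem_ray_right_iff hsin).mpr ⟨hsub hq, hqx⟩⟩⟩

lemma mem_omegaCloud_iff :
    x ∈ omegaCloud P ω ↔ ∃ θ, IsMinWedge P ω x (unitVec θ) (unitVec (θ + ω)) := by
  refine ⟨?_, fun ⟨θ, h⟩ ↦ ⟨_, _, h⟩⟩
  rintro ⟨d₁, d₂, h⟩
  obtain ⟨α, rfl⟩ := exists_unitVec_eq_of_norm_eq_one h.1
  obtain ⟨β, rfl⟩ := exists_unitVec_eq_of_norm_eq_one h.2.1
  have hcos : cos ω = cos (α - β) := by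
    rw [← h.2.2.1, angle_unitVec_unitVec, cos_arccos (neg_one_le_cos _) (cos_le_one _)]
  obtain ⟨k, hk | hk⟩ := cos_eq_cos_iff.mp hcos
  · have hα : unitVec α = unitVec (β + ω) := unitVec_eq_unitVec_iff.mpr ⟨k, by linarith⟩
    exact ⟨β, hα ▸ h.symm⟩
  · have hβ : unitVec β = unitVec (α + ω) := unitVec_eq_unitVec_iff.mpr ⟨-k, by push_cast; linarith⟩
    exact ⟨α, hβ ▸ h⟩

lemma exists_polar_of_mem_wedgeSet (hω : ω ∈ Ioo 0 π)
    (hy : y ∈ wedgeSet x (unitVec θ) (unitVec (θ + ω))) (hyx : y ≠ x) :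
    ∃ r : ℝ, 0 < r ∧ ∃ γ ∈ Icc θ (θ + ω), y = x + r • unitVec γ := by
  obtain ⟨r, γ', hr₀, hyr⟩ := exists_eq_smul_unitVec (y - x)
  obtain ⟨γ, hγ, hγγ'⟩ := exists_mem_Ioc_unitVec_eq (θ - π) γ'
  rw [← hγγ', sub_eq_iff_eq_add'] at hyr
  subst hyr
  have hr : 0 < r := hr₀.lt_of_ne' fun h ↦ hyx (by simp [h])
  obtain ⟨h₁, h₂⟩ := (mem_wedgeSet_unitVec_iff (sin_pos_of_mem_Ioo hω)).mp hy
  rw [inner_add_right, add_le_iff_nonpos_right, real_inner_smul_right,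
    mul_nonpos_iff_pos_imp_nonpos] at h₁ h₂
  have hsin₁ : sin (θ - γ) ≤ 0 := inner_unitVec_sub_pi_div_two θ γ ▸ h₁.1 hr
  have hsin₂ : sin (γ - (θ + ω)) ≤ 0 := inner_unitVec_add_pi_div_two (θ + ω) γ ▸ h₂.1 hr
  refine ⟨r, hr, γ, ⟨?_, ?_⟩, rfl⟩
  · by_contra! hlt
    exact hsin₁.not_gt (sin_pos_of_pos_of_lt_pi (by linarith) (by linarith [hγ.1]))
  · by_contra! hlt
    exact hsin₂.not_gt (sin_pos_of_pos_of_lt_pi (by linarith) (by linarith [hγ.2, hω.1]))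

lemma exists_polar_of_mem_wedgeSet_of_mem_wedgeSet (hω : ω ∈ Ioo 0 π) (hs : s ∈ Ioc 0 π)
    (hy : y ∈ wedgeSet x (unitVec θ) (unitVec (θ + ω)))
    (hy' : y ∈ wedgeSet x (unitVec (θ + s)) (unitVec (θ + s + ω))) (hyx : y ≠ x) :
    ∃ r : ℝ, 0 < r ∧ ∃ γ ∈ Icc (θ + s) (θ + ω), y = x + r • unitVec γ := by
  obtain ⟨r, hr, γ, hγ, hyr⟩ := exists_polar_of_mem_wedgeSet hω hy hyx
  obtain ⟨r', hr', γ', hγ', hyr'⟩ := exists_polar_of_mem_wedgeSet hω hy' hyx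
  have hsmul : r • unitVec γ = r' • unitVec γ' := add_left_cancel (hyr.symm.trans hyr')
  have hrr' : r = r' := by
    simpa [norm_smul, abs_of_pos hr, abs_of_pos hr'] using congrArg norm hsmul
  have hγγ' : γ = γ' := by
    refine eq_of_unitVec_eq_of_abs_sub_lt (smul_right_injective _ hr.ne' (hrr' ▸ hsmul)) ?_
    rw [abs_lt]
    constructor <;> linarith [hγ.1, hγ.2, hγ'.1, hγ'.2, hω.2, hs.1, hs.2]
  exact ⟨r, hr, γ, ⟨hγγ' ▸ hγ'.1, hγ.2⟩, hyr⟩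

lemma interiorAngle_le_of_forall_exists_polar {a b : ℝ} (hab : b - a ≤ π)
    (h : ∀ y ∈ P, y ≠ x → ∃ r : ℝ, 0 < r ∧ ∃ γ ∈ Icc a b, y = x + r • unitVec γ) :
    interiorAngle P x ≤ max 0 (b - a) := by
  refine Real.sSup_le ?_ (le_max_left _ _)
  rintro _ ⟨y, hy, z, hz, hyx, hzx, rfl⟩
  obtain ⟨r, hr, γ, hγ, rfl⟩ := h y hy hyx
  obtain ⟨r', hr', γ', hγ', rfl⟩ := h z hz hzx
  have hle : |γ - γ'| ≤ b - a := by
    rw [abs_le]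
    constructor <;> linarith [hγ.1, hγ.2, hγ'.1, hγ'.2]
  rw [EuclideanGeometry.angle, vsub_eq_sub, vsub_eq_sub, add_sub_cancel_left, add_sub_cancel_left,
    InnerProductGeometry.angle_smul_left_of_pos _ _ hr,
    InnerProductGeometry.angle_smul_right_of_pos _ _ hr',
    angle_unitVec_unitVec_of_abs_le (hle.trans hab)]
  exact hle.trans (le_max_right _ _)

/-- Two minimal wedges with the same apex `x` confine `P` to a narrower wedge, which leaves `x` as
the only possible contact point on the right arm of the first one. -/
lemma interiorAngle_lt_of_isMinWedge_of_isMinWedge (hω : ω ∈ Ioo 0 π) (hs : s ∈ Ioc 0 π)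
    (h : IsMinWedge P ω x (unitVec θ) (unitVec (θ + ω)))
    (h' : IsMinWedge P ω x (unitVec (θ + s)) (unitVec (θ + s + ω)))
    (hy : y ∈ P) (hyx : ⟪unitVec (θ - π / 2), y⟫_ℝ = ⟪unitVec (θ - π / 2), x⟫_ℝ) :
    interiorAngle P y < ω := by
  obtain ⟨-, -, -, hsub, -, -⟩ := h
  obtain ⟨-, -, -, hsub', -, -⟩ := h'
  have hpolar : ∀ z ∈ P, z ≠ x →
      ∃ r : ℝ, 0 < r ∧ ∃ γ ∈ Icc (θ + s) (θ + ω), z = x + r • unitVec γ :=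
    fun z hz ↦ exists_polar_of_mem_wedgeSet_of_mem_wedgeSet hω hs (hsub hz) (hsub' hz)
  have hxy : y = x := by
    by_contra hne
    obtain ⟨r, hr, γ, hγ, rfl⟩ := hpolar y hy hne
    rw [inner_add_right, add_eq_left, real_inner_smul_right, inner_unitVec_sub_pi_div_two,
      mul_eq_zero, or_iff_right hr.ne'] at hyx
    have : sin (θ - γ) < 0 :=
      sin_neg_of_neg_of_neg_pi_lt (by linarith [hγ.1, hs.1]) (by linarith [hγ.2, hω.2])
    exact this.ne hyx
  subst hxy
  calc interiorAngle P y ≤ max 0 (θ + ω - (θ + s)) :=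
        interiorAngle_le_of_forall_exists_polar (by linarith [hω.2, hs.1]) hpolar
    _ < ω := max_lt hω.1 (by linarith [hs.1])

end Wedge

section SupportFunction

open scoped InnerProductSpace

variable {P : Set Plane}

/-- The support function of `P`: `⟪unitVec α, x⟫ = supportFun P α` is the supporting line of `P`
with outer normal `unitVec α`. -/
def supportFun (P : Set Plane) (α : ℝ) : ℝ :=
  sSup ((⟪unitVec α, ·⟫_ℝ) '' P)

lemma isGreatest_inner_image_iff (hP : IsCompact P) (hne : P.Nonempty) {α c : ℝ} :
    IsGreatest ((⟪unitVec α, ·⟫_ℝ) '' P) c ↔ c = supportFun P α := by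
  have hmax : IsGreatest ((⟪unitVec α, ·⟫_ℝ) '' P) (supportFun P α) :=
    (hP.image (by fun_prop)).isGreatest_sSup (hne.image _)
  exact ⟨fun h ↦ h.unique hmax, fun h ↦ h ▸ hmax⟩

lemma continuous_supportFun (hP : IsCompact P) : Continuous (supportFun P) :=
  hP.continuous_sSup (f := fun α x ↦ ⟪unitVec α, x⟫_ℝ) (by fun_prop)

lemma periodic_supportFun (P : Set Plane) : Function.Periodic (supportFun P) (2 * π) := fun α ↦ by
  rw [supportFun, periodic_unitVec, supportFun]

lemma exists_inner_eq_supportFun_convexHull {V : Set Plane} (hV : V.Finite) (hne : V.Nonempty)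
    (α : ℝ) : ∃ v ∈ V, ⟪unitVec α, v⟫_ℝ = supportFun (convexHull ℝ V) α := by
  obtain ⟨⟨x, hx, hxα⟩, hmax⟩ :=
    (isGreatest_inner_image_iff (hV.isCompact_convexHull ℝ) hne.convexHull (α := α)).mpr rfl
  have hconvex : ConvexOn ℝ (convexHull ℝ V) (⟪unitVec α, ·⟫_ℝ) :=
    (innerₗ Plane (unitVec α)).convexOn (convex_convexHull ℝ V)
  obtain ⟨v, hv, hvx⟩ := hconvex.exists_ge_of_mem_convexHull (subset_convexHull ℝ V) hx
  exact ⟨v, hv, (hmax (mem_image_of_mem _ (subset_convexHull ℝ V hv))).antisymm (hxα ▸ hvx)⟩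

end SupportFunction

section Cloud

open scoped InnerProductSpace

local instance : Fact (0 < 2 * π) := ⟨two_pi_pos⟩

variable {P : Set Plane} {ω : ℝ}

/-- The apex of the minimal `ω`-wedge of `P` whose arms have the directions `θ` and `θ + ω`. -/
def apex (P : Set Plane) (ω θ : ℝ) : Plane :=
  lineInter ω θ (supportFun P (θ - π / 2)) (supportFun P (θ + ω + π / 2))

lemma isMinWedge_unitVec_iff_eq_apex (hP : IsCompact P) (hne : P.Nonempty) (hω : ω ∈ Ioo 0 π)
    {x : Plane} {θ : ℝ} :
    IsMinWedge P ω x (unitVec θ) (unitVec (θ + ω)) ↔ x = apex P ω θ := by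
  rw [isMinWedge_unitVec_iff hω, isGreatest_inner_image_iff hP hne,
    isGreatest_inner_image_iff hP hne, apex, eq_lineInter_iff (sin_pos_of_mem_Ioo hω).ne']

lemma continuous_apex (hP : IsCompact P) : Continuous (apex P ω) := by
  have := continuous_supportFun hP
  unfold apex lineInter
  fun_prop

lemma periodic_apex (P : Set Plane) (ω : ℝ) : Function.Periodic (apex P ω) (2 * π) := fun θ ↦ by
  simp only [apex, lineInter, add_sub_right_comm, add_right_comm _ (2 * π), periodic_unitVec _,
    periodic_supportFun P _]

/-- The `ω`-cloud as a closed curve, parametrised by the direction of the first arm of the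
minimal wedge. -/
def cloudParam (P : Set Plane) (ω : ℝ) : AddCircle (2 * π) → Plane :=
  (periodic_apex P ω).lift

lemma cloudParam_coe (θ : ℝ) : cloudParam P ω θ = apex P ω θ :=
  (periodic_apex P ω).lift_coe θ

lemma continuous_cloudParam (hP : IsCompact P) : Continuous (cloudParam P ω) :=
  continuous_coinduced_dom.mpr (continuous_apex hP)

lemma range_cloudParam (hP : IsCompact P) (hne : P.Nonempty) (hω : ω ∈ Ioo 0 π) :
    range (cloudParam P ω) = omegaCloud P ω := by
  ext x
  rw [mem_omegaCloud_iff, ← QuotientAddGroup.mk_surjective.range_comp, mem_range]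
  refine exists_congr fun θ ↦ ?_
  rw [isMinWedge_unitVec_iff_eq_apex hP hne hω, eq_comm, ← cloudParam_coe]
  rfl

lemma apex_ne_apex_add (hP : IsCompact P) (hω : ω ∈ Ioo 0 π)
    (hang : ∀ α, ∃ p ∈ P, ⟪unitVec α, p⟫_ℝ = supportFun P α ∧ ω ≤ interiorAngle P p)
    {s : ℝ} (hs : s ∈ Ioc 0 π) (θ : ℝ) : apex P ω θ ≠ apex P ω (θ + s) := by
  intro heq
  obtain ⟨p, hp, hpmax, hpω⟩ := hang (θ - π / 2)
  have hwedge {φ : ℝ} := isMinWedge_unitVec_iff_eq_apex (θ := φ) hP ⟨p, hp⟩ hω (x := apex P ω θ)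
  have hcontact : ⟪unitVec (θ - π / 2), apex P ω θ⟫_ℝ = supportFun P (θ - π / 2) :=
    ((eq_lineInter_iff (sin_pos_of_mem_Ioo hω).ne').mp (apex.eq_def P ω θ)).1
  exact (interiorAngle_lt_of_isMinWedge_of_isMinWedge hω hs (hwedge.mpr rfl) (hwedge.mpr heq) hp
    (hpmax.trans hcontact.symm)).not_ge hpω

lemma injective_cloudParam (hP : IsCompact P) (hω : ω ∈ Ioo 0 π)
    (hang : ∀ α, ∃ p ∈ P, ⟪unitVec α, p⟫_ℝ = supportFun P α ∧ ω ≤ interiorAngle P p) :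
    Function.Injective (cloudParam P ω) := by
  have hne {s : ℝ} (hs : s ∈ Ioc 0 π) (a : AddCircle (2 * π)) :
      cloudParam P ω a ≠ cloudParam P ω (a + s) := by
    induction a using QuotientAddGroup.induction_on with | H θ
    exact apex_ne_apex_add hP hω hang hs θ
  intro a b hab
  obtain ⟨s, hs, hsab⟩ : (b - a) ∈ ((↑) : ℝ → AddCircle (2 * π)) '' Ioc (-π) (-π + 2 * π) := by
    simp [AddCircle.coe_image_Ioc_eq]
  obtain hneg | rfl | hpos := lt_trichotomy s 0
  · have hba : b + ((-s : ℝ) : AddCircle (2 * π)) = a := by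
      rw [AddCircle.coe_neg, hsab]
      abel
    exact absurd (hab.symm.trans (by rw [hba])) (hne ⟨by linarith, by linarith [hs.1]⟩ b)
  · exact (sub_eq_zero.mp hsab.symm).symm
  · have hab' : a + s = b := by rw [hsab, add_sub_cancel]
    exact absurd (hab.trans (by rw [hab'])) (hne ⟨hpos, by linarith [hs.2]⟩ a)

end Cloud

section CircleTiling

open MeasureTheory

variable {T : ℝ}

lemma isOpen_coe_image_Ioo (a b : ℝ) :
    IsOpen (((↑) : ℝ → AddCircle T) '' Ioo a b) :=
  QuotientAddGroup.isOpenMap_coe _ isOpen_Ioo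

variable [hT : Fact (0 < T)]

instance nullSingletonClass_volume_addCircle :
    NullSingletonClass (volume : Measure (AddCircle T)) where
  measure_singleton x := by
    rw [← Metric.closedBall_zero, AddCircle.volume_closedBall, mul_zero, min_eq_right hT.out.le,
      ENNReal.ofReal_zero]

lemma volume_coe_image_Ioo {a d : ℝ} (hd : d ≤ T) :
    volume (((↑) : ℝ → AddCircle T) '' Ioo a (a + d)) = ENNReal.ofReal d := by
  have hsub : Ioo a (a + d) ⊆ Ioc a (a + T) := fun t ht ↦ ⟨ht.1, by linarith [ht.2]⟩
  have hpre : QuotientAddGroup.mk ⁻¹' (((↑) : ℝ → AddCircle T) '' Ioo a (a + d)) ∩ Ioc a (a + T) =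
      Ioo a (a + d) := by
    refine Subset.antisymm ?_ fun t ht ↦ ⟨mem_image_of_mem _ ht, hsub ht⟩
    rintro t ⟨⟨t', ht', htt'⟩, ht⟩
    rwa [← (AddCircle.coe_eq_coe_iff_of_mem_Ioc (hsub ht') ht).mp htt']
  rw [AddCircle.add_projection_respects_measure T a (isOpen_coe_image_Ioo a _).measurableSet,
    hpre, Real.volume_Ioo, add_sub_cancel_left]

lemma sum_length_eq_of_tiling {ι : Type*} [Fintype ι] {a d : ι → ℝ}
    (hd : ∀ i, 0 ≤ d i) (hdT : ∀ i, d i ≤ T)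
    (hcover : ⋃ i, ((↑) : ℝ → AddCircle T) '' Icc (a i) (a i + d i) = univ)
    (hdisj : Pairwise fun i j ↦ Disjoint (((↑) : ℝ → AddCircle T) '' Ioo (a i) (a i + d i))
      ((↑) '' Ioo (a j) (a j + d j))) :
    ∑ i, d i = T := by
  set O : ι → Set (AddCircle T) := fun i ↦ (↑) '' Ioo (a i) (a i + d i)
  have hO (i : ι) : MeasurableSet (O i) := (isOpen_coe_image_Ioo _ _).measurableSet
  have hcompl : (⋃ i, O i)ᶜ ⊆ ⋃ i, ((↑) : ℝ → AddCircle T) '' {a i, a i + d i} := by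
    rw [compl_subset_iff_union, ← iUnion_union_distrib, ← hcover]
    refine iUnion_congr fun i ↦ ?_
    rw [← image_union, Ioo_union_both (by linarith [hd i])]
  have hnull : volume (⋃ i, O i)ᶜ = 0 :=
    ((finite_iUnion fun i ↦ (toFinite _).image _).countable.mono hcompl).measure_zero _
  have hvol : ENNReal.ofReal (∑ i, d i) = ENNReal.ofReal T := by
    calc ENNReal.ofReal (∑ i, d i) = ∑ i, volume (O i) := by
          rw [ENNReal.ofReal_sum_of_nonneg fun i _ ↦ hd i]
          exact Finset.sum_congr rfl fun i _ ↦ (volume_coe_image_Ioo (hdT i)).symm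
      _ = volume (⋃ i, O i) := by rw [measure_iUnion hdisj hO, tsum_fintype]
      _ = volume (univ : Set (AddCircle T)) := measure_of_measure_compl_eq_zero hnull
      _ = ENNReal.ofReal T := AddCircle.measure_univ T
  exact (ENNReal.ofReal_eq_ofReal_iff (Finset.sum_nonneg fun i _ ↦ hd i) hT.out.le).mp hvol

end CircleTiling

section Circles

open Module

lemma finite_sphere_inter_sphere {E Q : Type*} [NormedAddCommGroup E] [InnerProductSpace ℝ E]
    [MetricSpace Q] [NormedAddTorsor E Q] [FiniteDimensional ℝ E] (hE : finrank ℝ E = 2)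
    {s₁ s₂ : Sphere Q} (hs : s₁ ≠ s₂) : ((s₁ : Set Q) ∩ s₂).Finite := by
  obtain hsub | ⟨p₁, hp₁, p₂, hp₂, hne⟩ := ((s₁ : Set Q) ∩ s₂).subsingleton_or_nontrivial
  · exact hsub.finite
  · refine (toFinite {p₁, p₂}).subset fun p hp ↦ ?_
    exact eq_of_mem_sphere_of_mem_sphere_of_finrank_eq_two hE hs hne hp₁.1 hp₂.1 hp.1
      hp₁.2 hp₂.2 hp.2

/-- The point at angular position `φ` on the circle with center `c` and radius `r`. -/
def circlePoint (c : Plane) (r φ : ℝ) : Plane := c + r • unitVec φ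

variable {c c' : Plane} {r r' φ φ' : ℝ}

lemma continuous_circlePoint (c : Plane) (r : ℝ) : Continuous (circlePoint c r) := by
  unfold circlePoint
  fun_prop

lemma periodic_circlePoint (c : Plane) (r : ℝ) : Function.Periodic (circlePoint c r) (2 * π) :=
  periodic_unitVec.comp fun v ↦ c + r • v

lemma circlePoint_mem_sphere (hr : 0 ≤ r) : circlePoint c r φ ∈ (⟨c, r⟩ : Sphere Plane) := by
  simp [EuclideanGeometry.mem_sphere, circlePoint, norm_smul, abs_of_nonneg hr]

lemma circlePoint_eq_circlePoint_iff (hr : r ≠ 0) :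
    circlePoint c r φ = circlePoint c r φ' ↔ ∃ k : ℤ, φ = φ' + k * (2 * π) := by
  rw [circlePoint, circlePoint, add_right_inj, (smul_right_injective _ hr).eq_iff,
    unitVec_eq_unitVec_iff]

lemma countable_circlePoint_preimage (hr : r ≠ 0) {s : Set Plane} (hs : s.Countable) :
    (circlePoint c r ⁻¹' s).Countable := by
  rw [← biUnion_preimage_singleton]
  refine hs.biUnion fun p _ ↦ ?_
  obtain hempty | ⟨φ', rfl⟩ := (circlePoint c r ⁻¹' {p}).eq_empty_or_nonempty
  · exact hempty ▸ countable_empty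
  · refine (countable_range fun k : ℤ ↦ φ' + k * (2 * π)).mono fun φ hφ ↦ ?_
    obtain ⟨k, hk⟩ := (circlePoint_eq_circlePoint_iff hr).mp hφ
    exact ⟨k, hk.symm⟩

/-- Two distinct circles share only finitely many points, while on a common circle the angular
position `2 * t + κ` of a point determines `t` up to multiples of `π`. -/
lemma countable_image_sub_half {κ : ℝ} (hr : 0 < r) (hr' : 0 ≤ r') {I : Set ℝ}
    {g : ℝ → AddCircle (2 * π)}
    (hg : ∀ φ ∈ I, ∃ t : ℝ, g φ = t ∧ circlePoint c r φ = circlePoint c' r' (2 * t + κ)) :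
    ((fun φ ↦ g φ - ((2⁻¹ * φ : ℝ) : AddCircle (2 * π))) '' I).Countable := by
  by_cases heq : (⟨c, r⟩ : Sphere Plane) = ⟨c', r'⟩
  · obtain ⟨rfl, rfl⟩ := Sphere.mk.inj heq
    refine (countable_range fun k : ℤ ↦ ((-2⁻¹ * κ - k * π : ℝ) : AddCircle (2 * π))).mono ?_
    rintro _ ⟨φ, hφ, rfl⟩
    obtain ⟨t, hgt, hpt⟩ := hg φ hφ
    obtain ⟨k, rfl⟩ := (circlePoint_eq_circlePoint_iff hr.ne').mp hpt
    refine ⟨k, ?_⟩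
    simp only [hgt, ← AddCircle.coe_sub]
    ring_nf
  · have hfin := finite_sphere_inter_sphere finrank_euclideanSpace_fin heq
    refine Countable.image ?_ _
    refine (countable_circlePoint_preimage (c := c) hr.ne' hfin.countable).mono fun φ hφ ↦ ?_
    obtain ⟨t, -, hpt⟩ := hg φ hφ
    exact ⟨circlePoint_mem_sphere hr.le, hpt ▸ circlePoint_mem_sphere hr'⟩

end Circles

section ArcLift

local instance inst_s5 : Fact (0 < 2 * π) := ⟨two_pi_pos⟩

variable {ι : Type*} {F : AddCircle (2 * π) → Plane} {c : ι → Plane} {ρ κ : ι → ℝ}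

/-- `F⁻¹` of an arc minus half the angular position on it is continuous and, as `F` runs along
countably many circles, takes only countably many values. -/
lemma exists_circlePoint_eq_comp_half [Countable ι] (hF : Continuous F)
    (hinj : F.Injective) (hρ : ∀ i, 0 ≤ ρ i)
    (hcirc : ∀ t : ℝ, ∃ i, F t = circlePoint (c i) (ρ i) (2 * t + κ i))
    {c₀ : Plane} {r : ℝ} (hr : 0 < r) {I : Set ℝ} (hI : IsPreconnected I)
    (hrange : circlePoint c₀ r '' I ⊆ range F) :
    ∃ a : ℝ, ∀ φ ∈ I, circlePoint c₀ r φ = F ((2⁻¹ * φ + a : ℝ) : AddCircle (2 * π)) := by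
  choose! g hg using fun φ (hφ : φ ∈ I) ↦ hrange (mem_image_of_mem _ hφ)
  have hgcont : ContinuousOn g I :=
    (hF.isClosedEmbedding hinj).isInducing.continuousOn_iff.mpr
      ((continuous_circlePoint c₀ r).continuousOn.congr hg)
  set G : ℝ → AddCircle (2 * π) := fun φ ↦ g φ - ((2⁻¹ * φ : ℝ) : AddCircle (2 * π)) with hG
  have hGcont : ContinuousOn G I :=
    hgcont.sub ((AddCircle.continuous_mk' _).comp (by fun_prop)).continuousOn
  have hcount : (G '' I).Countable := by
    have hsub : G '' I ⊆ ⋃ i, G '' {φ ∈ I | ∃ t : ℝ, g φ = t ∧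
        circlePoint c₀ r φ = circlePoint (c i) (ρ i) (2 * t + κ i)} := by
      rw [← image_iUnion]
      refine image_mono fun φ hφ ↦ ?_
      obtain ⟨t, ht⟩ := QuotientAddGroup.mk_surjective (g φ)
      obtain ⟨i, hi⟩ := hcirc t
      exact mem_iUnion.mpr ⟨i, hφ, t, ht.symm, by rw [← hg φ hφ, ← ht]; exact hi⟩
    exact (countable_iUnion fun i ↦
      countable_image_sub_half hr (hρ i) fun φ hφ ↦ hφ.2).mono hsub
  have hconst : (G '' I).Subsingleton :=
    hcount.isTotallyDisconnected _ subset_rfl (hI.image _ hGcont)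
  obtain rfl | ⟨φ₀, hφ₀⟩ := I.eq_empty_or_nonempty
  · simp
  obtain ⟨a, ha⟩ := QuotientAddGroup.mk_surjective (G φ₀)
  refine ⟨a, fun φ hφ ↦ ?_⟩
  have hGφ : G φ = (a : AddCircle (2 * π)) :=
    (hconst (mem_image_of_mem _ hφ) (mem_image_of_mem _ hφ₀)).trans ha.symm
  rw [AddCircle.coe_add, ← hGφ, hG, add_sub_cancel, hg φ hφ]

lemma CircArc.points_eq_image (A : CircArc) :
    A.points = circlePoint A.center A.radius '' Icc A.start (A.start + A.delta) := by
  simp only [CircArc.points, circlePoint, image, eq_comm]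

lemma CircArc.intPoints_eq_image (A : CircArc) :
    A.intPoints = circlePoint A.center A.radius '' Ioo A.start (A.start + A.delta) := by
  simp only [CircArc.intPoints, circlePoint, image, eq_comm]

lemma CircArc.exists_lift [Countable ι] (hF : Continuous F) (hinj : F.Injective)
    (hρ : ∀ i, 0 ≤ ρ i) (hcirc : ∀ t : ℝ, ∃ i, F t = circlePoint (c i) (ρ i) (2 * t + κ i))
    {A : CircArc} (hr : 0 < A.radius) (hrange : A.points ⊆ range F) :
    ∃ a : ℝ, A.points = F '' ((↑) '' Icc a (a + A.delta / 2)) ∧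
      A.intPoints = F '' ((↑) '' Ioo a (a + A.delta / 2)) ∧ A.delta < 2 * π := by
  rw [A.points_eq_image] at hrange ⊢
  obtain ⟨a, ha⟩ :=
    exists_circlePoint_eq_comp_half hF hinj hρ hcirc hr isPreconnected_Icc hrange
  have hend : 2⁻¹ * (A.start + A.delta) + a = 2⁻¹ * A.start + a + A.delta / 2 := by ring
  refine ⟨2⁻¹ * A.start + a, ?_, ?_, ?_⟩
  · rw [← hend, ← image_affine_Icc' (by norm_num), image_image, image_image]
    exact image_congr ha
  · rw [A.intPoints_eq_image, ← hend, ← image_affine_Ioo (by norm_num), image_image, image_image]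
    exact image_congr fun φ hφ ↦ ha φ (Ioo_subset_Icc_self hφ)
  · -- After a full turn the point on the circle recurs, but its preimage has made only half a turn.
    by_contra! hle
    have hF_eq : F ((2⁻¹ * A.start + a : ℝ) : AddCircle (2 * π)) =
        F ((2⁻¹ * (A.start + 2 * π) + a : ℝ) : AddCircle (2 * π)) := by
      rw [← ha, ← ha, periodic_circlePoint]
      · constructor <;> linarith [two_pi_pos]
      · constructor <;> linarith [two_pi_pos]
    have hpi : ((π : ℝ) : AddCircle (2 * π)) = 0 := by
      have h := hinj hF_eq
      rwa [show 2⁻¹ * (A.start + 2 * π) + a = 2⁻¹ * A.start + a + π by ring,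
        AddCircle.coe_add _ _ π, left_eq_add] at h
    exact Real.Angle.pi_ne_zero hpi

lemma CircArc.sum_delta_eq_four_pi [Countable ι] (hF : Continuous F) (hinj : F.Injective)
    (hρ : ∀ i, 0 ≤ ρ i) (hcirc : ∀ t : ℝ, ∃ i, F t = circlePoint (c i) (ρ i) (2 * t + κ i))
    {σ : Type*} [Fintype σ] {A : σ → CircArc} (hr : ∀ i, 0 < (A i).radius)
    (hδ : ∀ i, 0 ≤ (A i).delta) (hcover : ⋃ i, (A i).points = range F)
    (hdisj : ∀ i j, i ≠ j → Disjoint (A i).intPoints (A j).intPoints) :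
    ∑ i, (A i).delta = 4 * π := by
  choose a hpoints hint hlt using fun i ↦
    CircArc.exists_lift hF hinj hρ hcirc (hr i) (hcover ▸ subset_iUnion (fun j ↦ (A j).points) i)
  have hsum : ∑ i, (A i).delta / 2 = 2 * π := by
    refine sum_length_eq_of_tiling (a := a) (fun i ↦ div_nonneg (hδ i) zero_le_two)
      (fun i ↦ by linarith [hlt i, hδ i]) (hinj.image_injective ?_) fun i j hij ↦ ?_
    · rw [image_iUnion, image_univ, ← hcover, iUnion_congr hpoints]
    · exact (disjoint_image_iff hinj).mp (hint i ▸ hint j ▸ hdisj i j hij)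
  rw [← Finset.sum_div] at hsum
  linarith

end ArcLift

section PolygonCloud

variable {V : Set Plane}

lemma exists_circles_apex_convexHull (hV : V.Finite) (hne : V.Nonempty) (ω : ℝ) :
    ∃ (c : V × V → Plane) (ρ κ : V × V → ℝ), (∀ i, 0 ≤ ρ i) ∧
      ∀ θ, ∃ i, apex (convexHull ℝ V) ω θ = circlePoint (c i) (ρ i) (2 * θ + κ i) := by
  choose c ρ κ hρ h using fun i : V × V ↦ exists_lineInter_inner_eq ω (i.1 : Plane) i.2
  refine ⟨c, ρ, κ, hρ, fun θ ↦ ?_⟩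
  obtain ⟨p, hp, hpmax⟩ := exists_inner_eq_supportFun_convexHull hV hne (θ - π / 2)
  obtain ⟨q, hq, hqmax⟩ := exists_inner_eq_supportFun_convexHull hV hne (θ + ω + π / 2)
  exact ⟨(⟨p, hp⟩, ⟨q, hq⟩), by rw [apex, ← hpmax, ← hqmax]; exact h (⟨p, hp⟩, ⟨q, hq⟩) θ⟩

end PolygonCloud

/-- If no vertex of the convex polygon has interior angle less than `ω`, then the sum of the
angular measures of all arcs constituting the `ω`-cloud equals `4π`. -/
theorem stmt_5 (V : Finset Plane) (hV : IsConvexPolygon V) (ω : ℝ) (hω : ω ∈ Set.Ioo 0 π)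
    (hna : ∀ v ∈ V, ω ≤ interiorAngle (convexHull ℝ (V : Set Plane)) v)
    (m : ℕ) (arcs : Fin m → CircArc)
    (hprop : ∀ i, 0 < (arcs i).radius ∧ 0 < (arcs i).delta)
    (hcover : (⋃ i, (arcs i).points) = omegaCloud (convexHull ℝ (V : Set Plane)) ω)
    (hdisj : ∀ i j, i ≠ j → Disjoint (arcs i).intPoints (arcs j).intPoints) :
    ∑ i, (arcs i).delta = 4 * π := by
  have hne : (V : Set Plane).Nonempty := Finset.card_pos.mp (three_pos.trans_le hV.1)
  have hP : IsCompact (convexHull ℝ (V : Set Plane)) := V.finite_toSet.isCompact_convexHull ℝ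
  have hinj : (cloudParam (convexHull ℝ (V : Set Plane)) ω).Injective :=
    injective_cloudParam hP hω fun α ↦
      have ⟨v, hv, hvα⟩ := exists_inner_eq_supportFun_convexHull V.finite_toSet hne α
      ⟨v, subset_convexHull ℝ _ hv, hvα, hna v hv⟩
  obtain ⟨c, ρ, κ, hρ, hcirc⟩ := exists_circles_apex_convexHull V.finite_toSet hne ω
  exact CircArc.sum_delta_eq_four_pi (continuous_cloudParam hP) hinj hρ hcirc
    (fun i ↦ (hprop i).1) (fun i ↦ (hprop i).2.le)
    (hcover.trans (range_cloudParam hP hne.convexHull hω).symm) hdisj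

end
end

section
/- Let u be a narrow pivot of the ω-cloud Ω of a convex polygon P, and let v, w be points on Ω with τ(v,u) = τ(u,w) = 2(π−ω), where τ denotes total angular measure along Ω. Then the supporting circle of every arc of Ω strictly between v and w passes through u. -/
open EuclideanGeometry Real Set
open scoped Classical

noncomputable section

/-!
Let a minimal wedge with apex at a vertex `u` be turned counterclockwise as far as it will go.
Turning it further, by less than `π - ω`, forces its left arm to keep touching the polygon at `u`
only, while its apex leaves `u`. As long as the other contact is some vertex `q`, the inscribed
angle theorem makes the apex run along the circle through `u` and `q` at twice the speed of the
turning, so a total turn of `π - ω` corresponds to an angular measure `2 * (π - ω)` on the cloud.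

Conversely, an arc inside the cloud is traced in this way. By the pigeonhole principle some pair of
vertices is touched at infinitely many apices on any initial piece of the arc, so the arc lies on
the circle of that pair and the wedge turns at half the speed of the apex; closedness of the set of
minimal wedges propagates this along the arc and from one arc to the next. Reflection in a line
exchanges the two portions of the cloud at `u`.
-/

namespace OmegaWedge

open Filter Topology
open scoped ComplexConjugate

/-- The signed distance from the line through `0` in direction `exp (φ * I)`, positive on the left
of that line. -/
def side (φ : ℝ) : ℂ →ₗ[ℝ] ℝ := cos φ • Complex.imLm - sin φ • Complex.reLm

lemma side_apply (φ : ℝ) (z : ℂ) : side φ z = cos φ * z.im - sin φ * z.re := by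
  simp [side]

lemma side_polar (φ ρ η : ℝ) :
    side φ (ρ * Complex.exp (η * Complex.I)) = ρ * sin (η - φ) := by
  rw [side_apply, Complex.re_ofReal_mul, Complex.im_ofReal_mul, Complex.exp_ofReal_mul_I_re,
    Complex.exp_ofReal_mul_I_im, sin_sub]
  ring

lemma sin_sub_mul_side (a b c : ℝ) (z : ℂ) :
    sin (a - b) * side c z = sin (c - b) * side a z + sin (a - c) * side b z := by
  simp only [side_apply, sin_sub]
  ring

lemma side_add_int_mul_two_pi (φ : ℝ) (n : ℤ) : side (φ + n * (2 * π)) = side φ := by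
  rw [side, cos_add_int_mul_two_pi, sin_add_int_mul_two_pi, side]

lemma side_eq_zero_iff {φ : ℝ} {z : ℂ} :
    side φ z = 0 ↔ ∃ s : ℝ, z = s * Complex.exp (φ * Complex.I) := by
  constructor
  · intro hz
    rw [side_apply] at hz
    refine ⟨cos φ * z.re + sin φ * z.im, Complex.ext ?_ ?_⟩
    · rw [Complex.re_ofReal_mul, Complex.exp_ofReal_mul_I_re]
      linear_combination -sin φ * hz - z.re * sin_sq_add_cos_sq φ
    · rw [Complex.im_ofReal_mul, Complex.exp_ofReal_mul_I_im]
      linear_combination cos φ * hz - z.im * sin_sq_add_cos_sq φ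
  · rintro ⟨s, rfl⟩
    rw [side_polar, sub_self, sin_zero, mul_zero]

lemma eq_zero_of_side_eq_zero {a b : ℝ} {z : ℂ} (hab : sin (b - a) ≠ 0) (ha : side a z = 0)
    (hb : side b z = 0) : z = 0 := by
  obtain ⟨s, rfl⟩ := side_eq_zero_iff.mp ha
  rw [side_polar, mul_eq_zero, ← neg_sub, sin_neg, neg_eq_zero] at hb
  simp [hb.resolve_right hab]

lemma mem_Icc_of_sin_nonpos_of_sin_add_nonneg {ω κ : ℝ} (hω : ω ∈ Ioo 0 π) (hκ : κ ∈ Ico (-π) π)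
    (hsin : sin κ ≤ 0) (hsin_add : 0 ≤ sin (κ + ω)) : κ ∈ Icc (-ω) 0 := by
  constructor <;> by_contra! h
  · exact (sin_neg_of_neg_of_neg_pi_lt (by linarith) (by linarith [hκ.1, hω.1])).not_ge hsin_add
  · exact (sin_pos_of_pos_of_lt_pi h hκ.2).not_ge hsin

lemma exists_polar_mem_Icc {ω φ : ℝ} {z : ℂ} (hω : ω ∈ Ioo 0 π) (hz : z ≠ 0)
    (hleft : side φ z ≤ 0) (hright : 0 ≤ side (φ - ω) z) :
    ∃ η ∈ Icc (φ - ω) φ, ∃ ρ : ℝ, 0 < ρ ∧ z = ρ * Complex.exp (η * Complex.I) := by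
  obtain ⟨n, hn, -⟩ := existsUnique_add_zsmul_mem_Ico two_pi_pos (Complex.arg z) (φ - π)
  have hpolar : z = ‖z‖ * Complex.exp ((Complex.arg z + n • (2 * π) : ℝ) * Complex.I) := by
    have hturn := Complex.exp_periodic.zsmul n (Complex.arg z * Complex.I)
    conv_lhs => rw [← Complex.norm_mul_exp_arg_mul_I z, ← hturn]
    simp only [zsmul_eq_mul]
    push_cast
    ring_nf
  generalize Complex.arg z + n • (2 * π) = η at hn hpolar
  have hz_pos : 0 < ‖z‖ := norm_pos_iff.mpr hz
  rw [hpolar, side_polar] at hleft hright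
  have hκ := mem_Icc_of_sin_nonpos_of_sin_add_nonneg (κ := η - φ) hω
    ⟨by linarith [hn.1], by linarith [hn.2]⟩ (nonpos_of_mul_nonpos_right hleft hz_pos)
    (by rw [sub_add]; exact nonneg_of_mul_nonneg_right hright hz_pos)
  exact ⟨η, ⟨by linarith [hκ.1], by linarith [hκ.2]⟩, ‖z‖, hz_pos, hpolar⟩

lemma continuous_side {T : Type*} [TopologicalSpace T] {φ : T → ℝ} {z : T → ℂ} (hφ : Continuous φ)
    (hz : Continuous z) : Continuous fun t => side (φ t) (z t) := by
  simp only [side_apply]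
  fun_prop

/-- The wedge of angle `ω` with apex `x`, left arm in direction `exp (φ * I)` and right arm in
direction `exp ((φ - ω) * I)`, has `p` on the line of its left arm and `q` on the line of its
right arm. -/
def Touches (ω φ : ℝ) (x p q : ℂ) : Prop := side φ (p - x) = 0 ∧ side (φ - ω) (q - x) = 0

/-- The wedge of angle `ω` with apex `x` and left arm in direction `exp (φ * I)` is a minimal wedge
of the point set `V`: it contains `V` and both its arms touch `V`. -/
structure IsWedge (V : Set ℂ) (ω φ : ℝ) (x : ℂ) : Prop where
  left : ∀ v ∈ V, side φ (v - x) ≤ 0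
  right : ∀ v ∈ V, 0 ≤ side (φ - ω) (v - x)
  touches : ∃ p ∈ V, ∃ q ∈ V, Touches ω φ x p q

/-- The locus of apices of the minimal wedges of angle `ω` of the point set `V`. -/
def cloud (V : Set ℂ) (ω : ℝ) : Set ℂ := {x | ∃ φ, IsWedge V ω φ x}

section Wedge

variable {V : Set ℂ} {ω φ φ' : ℝ} {x y p q u : ℂ}

lemma touches_add_int_mul_two_pi (n : ℤ) :
    Touches ω (φ + n * (2 * π)) x p q ↔ Touches ω φ x p q := by
  rw [Touches, add_sub_right_comm, side_add_int_mul_two_pi, side_add_int_mul_two_pi, Touches]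

lemma isWedge_iff :
    IsWedge V ω φ x ↔ (∀ v ∈ V, side φ (v - x) ≤ 0) ∧ (∀ v ∈ V, 0 ≤ side (φ - ω) (v - x)) ∧
      ∃ p ∈ V, ∃ q ∈ V, Touches ω φ x p q :=
  ⟨fun ⟨hleft, hright, ht⟩ => ⟨hleft, hright, ht⟩, fun ⟨hleft, hright, ht⟩ => ⟨hleft, hright, ht⟩⟩

lemma isWedge_add_int_mul_two_pi (n : ℤ) :
    IsWedge V ω (φ + n * (2 * π)) x ↔ IsWedge V ω φ x := by
  simp only [isWedge_iff, touches_add_int_mul_two_pi, add_sub_right_comm, side_add_int_mul_two_pi]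

lemma IsWedge.eq_of_isWedge (hω : sin ω ≠ 0) (hx : IsWedge V ω φ x) (hy : IsWedge V ω φ y) :
    x = y := by
  obtain ⟨p, hp, q, hq, hpx, hqx⟩ := hx.touches
  obtain ⟨p', hp', q', hq', hpy, hqy⟩ := hy.touches
  have hleft₁ := hy.left p hp
  have hleft₂ := hx.left p' hp'
  have hright₁ := hy.right q hq
  have hright₂ := hx.right q' hq'
  simp only [map_sub] at hpx hqx hpy hqy hleft₁ hleft₂ hright₁ hright₂
  refine sub_eq_zero.mp (eq_zero_of_side_eq_zero (a := φ - ω) (b := φ) (by simpa using hω) ?_ ?_)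
  · rw [map_sub]; linarith
  · rw [map_sub]; linarith

lemma IsWedge.of_mem_Icc {a b : ℝ} (hab : a < b) (hba : b - a < π) (hu : u ∈ V)
    (ha : IsWedge V ω a u) (hb : IsWedge V ω b u) (hφ : φ ∈ Icc a b) : IsWedge V ω φ u := by
  have hsin : 0 < sin (b - a) := sin_pos_of_pos_of_lt_pi (sub_pos.mpr hab) hba
  have hleft : 0 ≤ sin (φ - a) := sin_nonneg_of_nonneg_of_le_pi (by linarith [hφ.1])
    (by linarith [hφ.2])
  have hright : 0 ≤ sin (b - φ) := sin_nonneg_of_nonneg_of_le_pi (by linarith [hφ.2])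
    (by linarith [hφ.1])
  refine ⟨fun v hv => ?_, fun v hv => ?_, u, hu, u, hu, by simp [Touches]⟩
  · have := sin_sub_mul_side b a φ (v - u)
    nlinarith [ha.left v hv, hb.left v hv]
  · have := sin_sub_mul_side (b - ω) (a - ω) (φ - ω) (v - u)
    simp only [sub_sub_sub_cancel_right] at this
    nlinarith [ha.right v hv, hb.right v hv]

lemma IsWedge.eq_add_int_mul_two_pi_of_touches (hω : 0 < sin ω) (hp : p ∈ V) (hq : q ∈ V)
    (hpx : p ≠ x) (hqx : q ≠ x) (h : IsWedge V ω φ x) (h' : IsWedge V ω φ' x)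
    (ht : Touches ω φ x p q) : ∃ n : ℤ, φ' = φ + n * (2 * π) := by
  obtain ⟨s, hs⟩ := side_eq_zero_iff.mp ht.1
  obtain ⟨t, ht⟩ := side_eq_zero_iff.mp ht.2
  have hs_pos : 0 < s := by
    have hright := h.right p hp
    rw [hs, side_polar, sub_sub_cancel] at hright
    refine (nonneg_of_mul_nonneg_left hright hω).lt_of_ne' ?_
    rintro rfl
    exact hpx (sub_eq_zero.mp (by simpa using hs))
  have ht_pos : 0 < t := by
    have hleft := h.left q hq
    rw [ht, side_polar, sub_sub_cancel_left, sin_neg, mul_neg, neg_nonpos] at hleft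
    refine (nonneg_of_mul_nonneg_left hleft hω).lt_of_ne' ?_
    rintro rfl
    exact hqx (sub_eq_zero.mp (by simpa using ht))
  have hsin_nonpos : sin (φ - φ') ≤ 0 := by
    have hleft := h'.left p hp
    rw [hs, side_polar] at hleft
    nlinarith
  have hsin_nonneg : 0 ≤ sin (φ - φ') := by
    have hright := h'.right q hq
    rw [ht, side_polar, sub_sub_sub_cancel_right] at hright
    nlinarith
  have hsin : sin (φ - φ') = 0 := le_antisymm hsin_nonpos hsin_nonneg
  have hcos : 0 ≤ cos (φ - φ') := by
    have hright := h'.right p hp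
    rw [hs, side_polar, show φ - (φ' - ω) = φ - φ' + ω by ring, sin_add, hsin] at hright
    nlinarith [mul_pos hs_pos hω]
  have hcos_one : cos (φ' - φ) = 1 := by
    rw [← neg_sub, cos_neg]
    nlinarith [sin_sq_add_cos_sq (φ - φ')]
  obtain ⟨n, hn⟩ := (cos_eq_one_iff _).mp hcos_one
  exact ⟨n, by linarith⟩

lemma isClosed_setOf_isWedge (hV : V.Finite) :
    IsClosed {t : ℝ × ℂ | IsWedge V ω t.1 t.2} := by
  have hleft (v : ℂ) : Continuous fun t : ℝ × ℂ => side t.1 (v - t.2) :=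
    continuous_side (by fun_prop) (by fun_prop)
  have hright (v : ℂ) : Continuous fun t : ℝ × ℂ => side (t.1 - ω) (v - t.2) :=
    continuous_side (by fun_prop) (by fun_prop)
  have hset : {t : ℝ × ℂ | IsWedge V ω t.1 t.2} =
      (⋂ v ∈ V, {t | side t.1 (v - t.2) ≤ 0}) ∩ (⋂ v ∈ V, {t | 0 ≤ side (t.1 - ω) (v - t.2)}) ∩
        ⋃ p ∈ V, ⋃ q ∈ V, {t | side t.1 (p - t.2) = 0} ∩ {t | side (t.1 - ω) (q - t.2) = 0} := by
    ext t
    simp only [isWedge_iff, Touches, and_assoc, mem_ofPred_eq, mem_inter_iff, mem_iInter,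
      mem_iUnion, exists_prop]
  rw [hset]
  exact ((isClosed_biInter fun v _ => isClosed_le (hleft v) continuous_const).inter
    (isClosed_biInter fun v _ => isClosed_le continuous_const (hright v))).inter
    (hV.isClosed_biUnion fun p _ => hV.isClosed_biUnion fun q _ =>
      (isClosed_eq (hleft p) continuous_const).inter (isClosed_eq (hright q) continuous_const))

end Wedge

section InscribedAngle

variable {ω φ : ℝ} {x p q : ℂ}

/-- The center of the circle traced by the apex of a wedge of angle `ω` that keeps touching `p`
with its left arm and `q` with its right arm. -/
def contactCenter (ω : ℝ) (p q : ℂ) : ℂ :=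
  p - Complex.I * Complex.exp (ω * Complex.I) * (q - p) / (2 * sin ω : ℝ)

/-- The radius of the circle around `contactCenter ω p q` through `p` and `q`. -/
def contactRadius (ω : ℝ) (p q : ℂ) : ℝ := ‖q - p‖ / (2 * sin ω)

/-- The position on the contact circle of the apex of the wedge of angle `ω` touching `p` and `q`
whose left arm has direction `1`. -/
def contactPhase (ω : ℝ) (p q : ℂ) : ℝ := Complex.arg (Complex.I * conj (q - p)) - ω

lemma dist_contactCenter (hω : 0 < sin ω) : dist p (contactCenter ω p q) = contactRadius ω p q := by
  rw [dist_eq_norm, contactCenter, contactRadius, sub_sub_cancel, norm_div, norm_mul, norm_mul,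
    Complex.norm_I, Complex.norm_exp_ofReal_mul_I, Complex.norm_real,
    norm_of_nonneg (by positivity), one_mul, one_mul]

lemma circleMap_contactPhase (t : ℝ) :
    circleMap (contactCenter ω p q) (contactRadius ω p q) (t + contactPhase ω p q) =
      contactCenter ω p q +
        Complex.I * conj (q - p) * Complex.exp ((t - ω : ℝ) * Complex.I) / (2 * sin ω : ℝ) := by
  have hpolar : (‖q - p‖ : ℂ) * Complex.exp (Complex.arg (Complex.I * conj (q - p)) * Complex.I) =
      Complex.I * conj (q - p) := by
    simpa only [norm_mul, Complex.norm_I, one_mul, Complex.norm_conj] using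
      Complex.norm_mul_exp_arg_mul_I (Complex.I * conj (q - p))
  rw [circleMap, contactRadius, contactPhase, add_sub_left_comm, Complex.ofReal_add, add_mul,
    Complex.exp_add, Complex.ofReal_div]
  linear_combination Complex.exp ((t - ω : ℝ) * Complex.I) / (2 * sin ω : ℝ) * hpolar

/-- The inscribed angle theorem: the apex runs along the contact circle at twice the speed at which
the wedge turns. -/
lemma Touches.eq_circleMap (hω : sin ω ≠ 0) (h : Touches ω φ x p q) :
    x = circleMap (contactCenter ω p q) (contactRadius ω p q) (2 * φ + contactPhase ω p q) := by
  obtain ⟨s, hs⟩ := side_eq_zero_iff.mp h.1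
  obtain ⟨t, ht⟩ := side_eq_zero_iff.mp h.2
  set a := Complex.exp (φ * Complex.I) with ha
  set b := Complex.exp (ω * Complex.I) with hb
  have hφω : Complex.exp ((φ - ω : ℝ) * Complex.I) = a / b := by
    rw [Complex.ofReal_sub, sub_mul, Complex.exp_sub]
  have hφφω : Complex.exp ((2 * φ - ω : ℝ) * Complex.I) = a ^ 2 / b := by
    rw [← Complex.exp_nat_mul, ← Complex.exp_sub]
    push_cast
    ring_nf
  have hsin : Complex.I * (2 * sin ω : ℝ) = b - b⁻¹ := by
    rw [← Complex.exp_neg, ← neg_mul, hb, Complex.exp_mul_I, Complex.exp_mul_I]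
    simp only [Complex.cos_neg, Complex.sin_neg]
    push_cast
    ring
  have hqp : q - p = t * (a / b) - s * a := by
    rw [← hs, ← hφω, ← ht, sub_sub_sub_cancel_right]
  have hconj : conj (q - p) = t * (b / a) - s * a⁻¹ := by
    have ha_conj : conj a = a⁻¹ := by simp [ha, ← Complex.exp_conj, Complex.exp_neg]
    have hb_conj : conj b = b⁻¹ := by simp [hb, ← Complex.exp_conj, Complex.exp_neg]
    simp only [hqp, map_sub, map_mul, map_div₀, Complex.conj_ofReal, ha_conj, hb_conj, inv_div_inv]
  have hb₀ : b ≠ 0 := Complex.exp_ne_zero _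
  have hω₀ : ((2 * sin ω : ℝ) : ℂ) ≠ 0 := by
    rw [Complex.ofReal_ne_zero]; positivity
  rw [circleMap_contactPhase, contactCenter, hφφω, hconj, ← hb, hqp]
  have hp : p = x + s * a := by rw [← hs]; ring
  rw [hp]
  generalize ((2 * sin ω : ℝ) : ℂ) = σ at *
  field_simp at hsin ⊢
  linear_combination s * a * Complex.I * hsin - s * a * σ * b * Complex.I_sq

end InscribedAngle

lemma finite_inter_sphere_of_finrank_eq_two {E P : Type*} [NormedAddCommGroup E]
    [InnerProductSpace ℝ E] [FiniteDimensional ℝ E] [MetricSpace P] [NormedAddTorsor E P]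
    (hE : Module.finrank ℝ E = 2) {s₁ s₂ : Sphere P} (hs : s₁ ≠ s₂) :
    ((s₁ : Set P) ∩ s₂).Finite := by
  obtain h | ⟨p₁, hp₁, p₂, hp₂, hp⟩ := ((s₁ : Set P) ∩ s₂).subsingleton_or_nontrivial
  · exact h.finite
  · exact (toFinite {p₁, p₂}).subset fun p hps =>
      eq_of_mem_sphere_of_mem_sphere_of_finrank_eq_two hE hs hp hp₁.1 hp₂.1 hps.1 hp₁.2 hp₂.2 hps.2

section CircleMap

variable {V : Set ℂ} {ω a r R : ℝ} {c C : ℂ}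

lemma eventually_circleMap_ne (hr : r ≠ 0) (z : ℂ) : ∀ᶠ θ in 𝓝[>] a, circleMap c r θ ≠ z := by
  by_contra h
  simp only [not_eventually, not_not] at h
  obtain ⟨θ₁, hθ₁, ha₁, hb₁⟩ :=
    (h.and_eventually (Ioo_mem_nhdsGT (lt_add_of_pos_right a two_pi_pos))).exists
  obtain ⟨θ₂, hθ₂, ha₂, hb₂⟩ := (h.and_eventually (Ioo_mem_nhdsGT ha₁)).exists
  refine hb₂.ne (eq_of_circleMap_eq hr ?_ (hθ₂.trans hθ₁.symm))
  rw [abs_lt]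
  constructor <;> linarith

lemma eq_of_frequently_circleMap_mem_sphere (hr : 0 < r)
    (h : ∃ᶠ θ in 𝓝[>] a, circleMap c r θ ∈ Metric.sphere C R) : c = C ∧ r = R := by
  by_contra hne
  have hfin : (Metric.sphere c r ∩ Metric.sphere C R).Finite :=
    finite_inter_sphere_of_finrank_eq_two (s₁ := ⟨c, r⟩) (s₂ := ⟨C, R⟩)
      Complex.finrank_real_complex (by simpa [EuclideanGeometry.Sphere.ext_iff] using hne)
  have hmem : ∃ᶠ θ in 𝓝[>] a, ∃ z ∈ Metric.sphere c r ∩ Metric.sphere C R, circleMap c r θ = z :=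
    h.mono fun θ hθ => ⟨_, ⟨circleMap_mem_sphere c hr.le θ, hθ⟩, rfl⟩
  obtain ⟨z, -, hz⟩ := hfin.frequently_exists.mp hmem
  exact hz (eventually_circleMap_ne hr.ne' z)

lemma exists_frequently_touches {l : Filter ℝ} {γ : ℝ → ℂ} (hV : V.Finite)
    (h : ∃ᶠ θ in l, γ θ ∈ cloud V ω) :
    ∃ p ∈ V, ∃ q ∈ V, ∃ᶠ θ in l, ∃ φ, IsWedge V ω φ (γ θ) ∧ Touches ω φ (γ θ) p q := by
  have htouch : ∃ᶠ θ in l, ∃ p ∈ V, ∃ q ∈ V, ∃ φ, IsWedge V ω φ (γ θ) ∧ Touches ω φ (γ θ) p q := by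
    refine h.mono ?_
    rintro θ ⟨φ, hφ⟩
    obtain ⟨p, hp, q, hq, ht⟩ := hφ.touches
    exact ⟨p, hp, q, hq, φ, hφ, ht⟩
  simpa only [hV.frequently_exists] using htouch

lemma exists_half_add_eq_of_circleMap_eq {θ φ β : ℝ} (hr : r ≠ 0)
    (h : circleMap c r θ = circleMap c r (2 * φ + β)) :
    ∃ α ∈ ({-(β / 2), π - β / 2} : Set ℝ), ∃ n : ℤ, θ / 2 + α = φ + n * (2 * π) := by
  obtain ⟨n, hn⟩ := (circleMap_eq_circleMap_iff c hr).mp h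
  have hθ : θ = 2 * φ + β + n * (2 * π) := by simpa using congrArg Complex.im hn
  obtain ⟨k, rfl | rfl⟩ := n.even_or_odd'
  · exact ⟨_, .inl rfl, k, by push_cast at hθ; linarith⟩
  · exact ⟨_, .inr rfl, k + 1, by push_cast at hθ ⊢; linarith⟩

lemma exists_frequently_isWedge_circleMap (hω : 0 < sin ω) (hV : V.Finite) (hr : 0 < r)
    (h : ∃ᶠ θ in 𝓝[>] a, circleMap c r θ ∈ cloud V ω) :
    ∃ α, ∃ p ∈ V, dist p c = r ∧ ∃ᶠ θ in 𝓝[>] a, IsWedge V ω (θ / 2 + α) (circleMap c r θ) ∧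
      side (θ / 2 + α) (p - circleMap c r θ) = 0 := by
  obtain ⟨p, hp, q, -, hfreq⟩ := exists_frequently_touches hV h
  have hsphere : ∃ᶠ θ in 𝓝[>] a,
      circleMap c r θ ∈ Metric.sphere (contactCenter ω p q) (contactRadius ω p q) := by
    refine hfreq.mono ?_
    rintro θ ⟨φ, -, ht⟩
    rw [ht.eq_circleMap hω.ne']
    exact circleMap_mem_sphere _ (by unfold contactRadius; positivity) _
  obtain ⟨hc, hr'⟩ := eq_of_frequently_circleMap_mem_sphere hr hsphere
  have hwedge : ∃ᶠ θ in 𝓝[>] a,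
      ∃ α ∈ ({-(contactPhase ω p q / 2), π - contactPhase ω p q / 2} : Set ℝ),
        IsWedge V ω (θ / 2 + α) (circleMap c r θ) ∧
          side (θ / 2 + α) (p - circleMap c r θ) = 0 := by
    refine hfreq.mono ?_
    rintro θ ⟨φ, hφ, ht⟩
    have hx := ht.eq_circleMap hω.ne'
    rw [← hc, ← hr'] at hx
    obtain ⟨α, hα, n, hn⟩ := exists_half_add_eq_of_circleMap_eq hr.ne' hx
    refine ⟨α, hα, ?_⟩
    rw [hn, isWedge_add_int_mul_two_pi, side_add_int_mul_two_pi]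
    exact ⟨hφ, ht.1⟩
  obtain ⟨α, -, hα⟩ := (toFinite _).frequently_exists.mp hwedge
  exact ⟨α, p, hp, by rw [hc, dist_contactCenter hω, hr'], hα⟩

end CircleMap

/-- The wedge with apex `u ∈ V` and left arm in direction `exp (ψ * I)` is the last minimal wedge
with apex `u` when turning counterclockwise: its right arm runs along another point of `V`. -/
structure IsLastWedge (V : Set ℂ) (ω ψ : ℝ) (u : ℂ) : Prop extends IsWedge V ω ψ u where
  mem : u ∈ V
  exists_right : ∃ b ∈ V, b ≠ u ∧ side (ψ - ω) (b - u) = 0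

namespace IsLastWedge

variable {V : Set ℂ} {ω ψ φ φ' : ℝ} {u x p : ℂ}

lemma exists_right_polar (h : IsLastWedge V ω ψ u) (hω : 0 < sin ω) :
    ∃ b ∈ V, ∃ ρ : ℝ, 0 < ρ ∧ b - u = ρ * Complex.exp ((ψ - ω : ℝ) * Complex.I) := by
  obtain ⟨b, hb, hbu, hside⟩ := h.exists_right
  obtain ⟨ρ, hρ⟩ := side_eq_zero_iff.mp hside
  have hleft := h.left b hb
  rw [hρ, side_polar, sub_sub_cancel_left, sin_neg, mul_neg, neg_nonpos] at hleft
  refine ⟨b, hb, ρ, (nonneg_of_mul_nonneg_left hleft hω).lt_of_ne' ?_, hρ⟩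
  rintro rfl
  exact hbu (sub_eq_zero.mp (by simpa using hρ))

lemma eq_of_side_nonneg (h : IsLastWedge V ω ψ u) (hω : ω ∈ Ioo 0 π) (hφ : φ ∈ Ioo ψ (ψ + π - ω))
    (hp : p ∈ V) (hside : 0 ≤ side φ (p - u)) : p = u := by
  have hsin := sin_pos_of_mem_Ioo hω
  have hsin₁ : 0 < sin (φ - (ψ - ω)) := sin_pos_of_pos_of_lt_pi (by linarith [hφ.1, hω.1])
    (by linarith [hφ.2])
  have hsin₂ : sin (ψ - φ) < 0 := sin_neg_of_neg_of_neg_pi_lt (by linarith [hφ.1])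
    (by linarith [hφ.2, hω.1])
  have hsum := sin_sub_mul_side ψ (ψ - ω) φ (p - u)
  rw [sub_sub_cancel] at hsum
  have hleft := mul_nonpos_of_nonneg_of_nonpos hsin₁.le (h.left p hp)
  have hright := mul_nonpos_of_nonpos_of_nonneg hsin₂.le (h.right p hp)
  have hside' := mul_nonneg hsin.le hside
  refine sub_eq_zero.mp (eq_zero_of_side_eq_zero (a := ψ - ω) (b := ψ) ?_ ?_ ?_)
  · simpa using hsin.ne'
  · exact (mul_eq_zero.mp (by linarith)).resolve_left hsin₂.ne
  · exact (mul_eq_zero.mp (by linarith)).resolve_left hsin₁.ne'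

lemma left_contact_eq (h : IsLastWedge V ω ψ u) (hω : ω ∈ Ioo 0 π) (hφ : φ ∈ Ioo ψ (ψ + π - ω))
    (hx : IsWedge V ω φ x) (hp : p ∈ V) (hside : side φ (p - x) = 0) : p = u := by
  refine h.eq_of_side_nonneg hω hφ hp ?_
  have hu := hx.left u h.mem
  rw [← sub_sub_sub_cancel_right p u x, map_sub]
  linarith

lemma apex_ne (h : IsLastWedge V ω ψ u) (hω : ω ∈ Ioo 0 π) (hφ : φ ∈ Ioo ψ (ψ + π - ω))
    (hx : IsWedge V ω φ x) : x ≠ u := by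
  rintro rfl
  obtain ⟨b, hb, ρ, hρ, hbu⟩ := h.exists_right_polar (sin_pos_of_mem_Ioo hω)
  have hright := hx.right b hb
  rw [hbu, side_polar, sub_sub_sub_cancel_right] at hright
  have hsin : sin (ψ - φ) < 0 := sin_neg_of_neg_of_neg_pi_lt (by linarith [hφ.1])
    (by linarith [hφ.2, hω.1])
  nlinarith

lemma eq_add_int_mul_two_pi (h : IsLastWedge V ω ψ u) (hω : ω ∈ Ioo 0 π)
    (hφ : φ ∈ Ioo ψ (ψ + π - ω)) (hx : IsWedge V ω φ x) (hx' : IsWedge V ω φ' x) :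
    ∃ n : ℤ, φ' = φ + n * (2 * π) := by
  obtain ⟨p, hp, q, hq, ht⟩ := hx.touches
  have hxu := h.apex_ne hω hφ hx
  refine hx.eq_add_int_mul_two_pi_of_touches (sin_pos_of_mem_Ioo hω) hp hq ?_ ?_ hx' ht
  · rw [h.left_contact_eq hω hφ hx hp ht.1]
    exact hxu.symm
  · rintro rfl
    exact hxu (h.left_contact_eq hω hφ hx hq (by simp))

lemma exists_add_int_mul_two_pi_mem_Icc (h : IsLastWedge V ω ψ u) (hω : ω ∈ Ioo 0 π)
    (hu : IsWedge V ω φ u) : ∃ n : ℤ, φ + n * (2 * π) ∈ Icc (ψ - ω) ψ := by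
  obtain ⟨n, hn, -⟩ := existsUnique_add_zsmul_mem_Ico two_pi_pos φ (ψ - π)
  rw [zsmul_eq_mul] at hn
  refine ⟨n, ?_⟩
  rw [← isWedge_add_int_mul_two_pi n] at hu
  generalize φ + n * (2 * π) = η at hn hu
  obtain ⟨b, hb, ρ, hρ, hbu⟩ := h.exists_right_polar (sin_pos_of_mem_Ioo hω)
  have hleft := hu.left b hb
  have hright := hu.right b hb
  rw [hbu, side_polar, ← neg_sub, sin_neg, mul_neg, neg_nonpos] at hleft
  rw [hbu, side_polar, sub_sub_sub_cancel_right, ← neg_sub, sin_neg, mul_neg, neg_nonneg] at hright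
  have hκ := mem_Icc_of_sin_nonpos_of_sin_add_nonneg (κ := η - ψ) hω
    ⟨by linarith [hn.1], by linarith [hn.2]⟩ (nonpos_of_mul_nonpos_right hright hρ)
    (by rw [sub_add]; exact nonneg_of_mul_nonneg_right hleft hρ)
  exact ⟨by linarith [hκ.1], by linarith [hκ.2]⟩

end IsLastWedge

section Continuation

variable {V : Set ℂ} {ω ψ α a b r : ℝ} {c u : ℂ}

lemma isClosed_setOf_isWedge_circleMap (hV : V.Finite) :
    IsClosed {θ : ℝ | IsWedge V ω (θ / 2 + α) (circleMap c r θ)} :=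
  (isClosed_setOf_isWedge hV).preimage
    ((by fun_prop : Continuous fun θ : ℝ => θ / 2 + α).prodMk (continuous_circleMap c r))

lemma isWedge_circleMap_of_frequently (hV : V.Finite)
    (h : ∃ᶠ θ in 𝓝[>] a, IsWedge V ω (θ / 2 + α) (circleMap c r θ)) :
    IsWedge V ω (a / 2 + α) (circleMap c r a) :=
  (isClosed_setOf_isWedge_circleMap hV).mem_of_frequently_of_tendsto h
    (tendsto_id.mono_left nhdsWithin_le_nhds)

/- Were the limit direction at `u` not the last one, all directions up to the last one would be
wedges at `u`, and by uniqueness of the apex the arc could not leave `u`. -/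
lemma IsLastWedge.exists_add_int_mul_two_pi_eq_of_frequently (h : IsLastWedge V ω ψ u)
    (hω : ω ∈ Ioo 0 π) (hV : V.Finite) (hr : r ≠ 0) (ha : circleMap c r a = u)
    (hfreq : ∃ᶠ θ in 𝓝[>] a, IsWedge V ω (θ / 2 + α) (circleMap c r θ)) :
    ∃ n : ℤ, a / 2 + α + n * (2 * π) = ψ := by
  have hlim : IsWedge V ω (a / 2 + α) u := ha ▸ isWedge_circleMap_of_frequently hV hfreq
  obtain ⟨n, hge, hle⟩ := h.exists_add_int_mul_two_pi_mem_Icc hω hlim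
  refine ⟨n, hle.eq_of_not_lt fun hlt => ?_⟩
  have hstay : ∀ᶠ θ in 𝓝[>] a, IsWedge V ω (θ / 2 + α) u := by
    filter_upwards [Ioo_mem_nhdsGT (show a < a + 2 * (ψ - (a / 2 + α + n * (2 * π))) by linarith)]
      with θ hθ
    rw [← isWedge_add_int_mul_two_pi n]
    exact .of_mem_Icc hlt (by linarith [hω.2]) h.mem ((isWedge_add_int_mul_two_pi n).mpr hlim)
      h.toIsWedge ⟨by linarith [hθ.1], by linarith [hθ.2]⟩
  have hconst : ∃ᶠ θ in 𝓝[>] a, circleMap c r θ = u :=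
    (hfreq.and_eventually hstay).mono fun θ hθ =>
      hθ.1.eq_of_isWedge (sin_pos_of_mem_Ioo hω).ne' hθ.2
  exact hconst (eventually_circleMap_ne hr u)

lemma IsLastWedge.frequently_isWedge_circleMap_and_dist_center (h : IsLastWedge V ω ψ u)
    (hω : ω ∈ Ioo 0 π) (hV : V.Finite) (hr : 0 < r) (hdir : a / 2 + α ∈ Ico ψ (ψ + π - ω))
    (ha : IsWedge V ω (a / 2 + α) (circleMap c r a))
    (hcloud : ∃ᶠ θ in 𝓝[>] a, circleMap c r θ ∈ cloud V ω) :
    (∃ᶠ θ in 𝓝[>] a, IsWedge V ω (θ / 2 + α) (circleMap c r θ)) ∧ dist u c = r := by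
  obtain ⟨β, p, hp, hpc, hfreq⟩ :=
    exists_frequently_isWedge_circleMap (sin_pos_of_mem_Ioo hω) hV hr hcloud
  have hfreq_wedge := hfreq.mono fun θ hθ => hθ.1
  obtain ⟨n, hn⟩ : ∃ n : ℤ, α = β + n * (2 * π) := by
    obtain hψ | hψ := hdir.1.eq_or_lt
    · have hau : circleMap c r a = u :=
        ha.eq_of_isWedge (sin_pos_of_mem_Ioo hω).ne' (hψ ▸ h.toIsWedge)
      obtain ⟨n, hn⟩ := h.exists_add_int_mul_two_pi_eq_of_frequently hω hV hr.ne' hau hfreq_wedge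
      exact ⟨n, by linarith⟩
    · obtain ⟨n, hn⟩ := h.eq_add_int_mul_two_pi hω ⟨hψ, hdir.2⟩ ha
        (isWedge_circleMap_of_frequently hV hfreq_wedge)
      exact ⟨-n, by push_cast; linarith⟩
  have hturn (θ : ℝ) : θ / 2 + α = θ / 2 + β + n * (2 * π) := by rw [hn, add_assoc]
  simp only [hturn, isWedge_add_int_mul_two_pi]
  refine ⟨hfreq_wedge, ?_⟩
  obtain ⟨θ, ⟨hθ, hside⟩, hθa, hθb⟩ := (hfreq.and_eventually (Ioo_mem_nhdsGT
    (show a < a + 2 * (ψ + π - ω - (a / 2 + α)) by linarith [hdir.2]))).exists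
  rw [← isWedge_add_int_mul_two_pi n, ← hturn] at hθ
  rw [← side_add_int_mul_two_pi _ n, ← hturn] at hside
  rw [← h.left_contact_eq hω ⟨by linarith [hdir.1], by linarith⟩ hθ hp hside, hpc]

lemma IsLastWedge.isWedge_circleMap_and_dist_center (h : IsLastWedge V ω ψ u) (hω : ω ∈ Ioo 0 π)
    (hV : V.Finite) (hr : 0 < r) (hab : a < b) (hψ : ψ ≤ a / 2 + α) (hdir : b / 2 + α ≤ ψ + π - ω)
    (ha : IsWedge V ω (a / 2 + α) (circleMap c r a))
    (hcloud : ∀ θ ∈ Icc a b, circleMap c r θ ∈ cloud V ω) :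
    IsWedge V ω (b / 2 + α) (circleMap c r b) ∧ dist u c = r := by
  have hlocal : ∀ θ ∈ Ico a b, IsWedge V ω (θ / 2 + α) (circleMap c r θ) →
      (∃ᶠ θ' in 𝓝[>] θ, IsWedge V ω (θ' / 2 + α) (circleMap c r θ')) ∧ dist u c = r := by
    intro θ hθ hwedge
    refine h.frequently_isWedge_circleMap_and_dist_center hω hV hr
      ⟨by linarith [hθ.1], by linarith [hθ.2]⟩ hwedge (Eventually.frequently ?_)
    filter_upwards [Ioo_mem_nhdsGT hθ.2] with θ' hθ'
    exact hcloud θ' ⟨hθ.1.trans hθ'.1.le, hθ'.2.le⟩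
  refine ⟨?_, (hlocal a ⟨le_rfl, hab⟩ ha).2⟩
  refine ((isClosed_setOf_isWedge_circleMap hV).inter isClosed_Icc).Icc_subset_of_forall_exists_gt
    ha ?_ ⟨hab.le, le_rfl⟩
  rintro θ ⟨hwedge, hθ⟩ y hy
  exact ((hlocal θ hθ hwedge).1.and_eventually (Ioc_mem_nhdsGT hy)).exists

end Continuation

/-- The arcs with centers `c i`, radii `r i`, starting angles `a i` and extents `δ i` form a
counterclockwise chain inside `S`: each arc ends where the next one starts. -/
structure IsArcChain (S : Set ℂ) {m : ℕ} (c : Fin (m + 1) → ℂ) (r a δ : Fin (m + 1) → ℝ) :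
    Prop where
  radius_pos : ∀ i, 0 < r i
  extent_pos : ∀ i, 0 < δ i
  circleMap_mem : ∀ i, ∀ θ ∈ Icc (a i) (a i + δ i), circleMap (c i) (r i) θ ∈ S
  end_eq_start : ∀ i : Fin m, circleMap (c i.castSucc) (r i.castSucc)
    (a i.castSucc + δ i.castSucc) = circleMap (c i.succ) (r i.succ) (a i.succ)

lemma IsArcChain.tail {S : Set ℂ} {m : ℕ} {c : Fin (m + 2) → ℂ} {r a δ : Fin (m + 2) → ℝ}
    (h : IsArcChain S c r a δ) :
    IsArcChain S (c ∘ Fin.succ) (r ∘ Fin.succ) (a ∘ Fin.succ) (δ ∘ Fin.succ) where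
  radius_pos i := h.radius_pos i.succ
  extent_pos i := h.extent_pos i.succ
  circleMap_mem i := h.circleMap_mem i.succ
  end_eq_start i := h.end_eq_start i.succ

section Chain

variable {V : Set ℂ} {ω ψ φ : ℝ} {u : ℂ}

lemma IsLastWedge.dist_center_of_isArcChain (h : IsLastWedge V ω ψ u) (hω : ω ∈ Ioo 0 π)
    (hV : V.Finite) {m : ℕ} {η : ℝ} {c : Fin (m + 1) → ℂ} {r a δ : Fin (m + 1) → ℝ}
    (hchain : IsArcChain (cloud V ω) c r a δ) (hψ : ψ ≤ η)
    (hsum : η + (∑ i, δ i) / 2 ≤ ψ + π - ω)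
    (hstart : IsWedge V ω η (circleMap (c 0) (r 0) (a 0))) (i : Fin (m + 1)) :
    dist u (c i) = r i := by
  have hδ := hchain.extent_pos
  have hδ₀ : δ 0 ≤ ∑ i, δ i := Finset.single_le_sum (fun i _ => (hδ i).le) (Finset.mem_univ 0)
  obtain ⟨hnext, hdist⟩ := h.isWedge_circleMap_and_dist_center hω hV (b := a 0 + δ 0)
    (α := η - a 0 / 2) (hchain.radius_pos 0) (by linarith [hδ 0]) (by linarith) (by linarith)
    (by rwa [add_sub_cancel]) (hchain.circleMap_mem 0)
  cases i using Fin.cases with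
  | zero => exact hdist
  | succ i =>
    cases m with
    | zero => exact i.elim0
    | succ m =>
      rw [Fin.sum_univ_succ] at hsum
      refine dist_center_of_isArcChain h hω hV (η := η + δ 0 / 2) hchain.tail (by linarith [hδ 0])
        (by simp only [Function.comp_apply]; linarith) ?_ i
      convert hnext using 1
      · ring
      · exact (hchain.end_eq_start 0).symm
termination_by m

lemma exists_isLastWedge (hω : ω ∈ Ioo 0 π) (hV : V.Finite) (hV₂ : V.Nontrivial) (hu : u ∈ V)
    (h : IsWedge V ω φ u) : ∃ ψ, IsLastWedge V ω ψ u := by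
  have hpolar : ∀ v ∈ V \ {u}, ∃ η ∈ Icc (φ - ω) φ, ∃ ρ : ℝ, 0 < ρ ∧
      v - u = ρ * Complex.exp (η * Complex.I) := fun v hv =>
    exists_polar_mem_Icc hω (sub_ne_zero.mpr hv.2) (h.left v hv.1) (h.right v hv.1)
  choose! η hη ρ hρ hvu using hpolar
  obtain ⟨b, hb, hmin⟩ := (V \ {u}).exists_min_image η hV.sdiff (hV₂.exists_ne u)
  refine ⟨η b + ω, ⟨fun v hv => ?_, fun v hv => ?_, u, hu, u, hu, by simp [Touches]⟩, hu,
    b, hb.1, hb.2, by rw [add_sub_cancel_right, hvu b hb, side_polar, sub_self, sin_zero, mul_zero]⟩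
  · obtain rfl | hne := eq_or_ne v u
    · simp
    · have hv' : v ∈ V \ {u} := ⟨hv, hne⟩
      rw [hvu v hv', side_polar]
      exact mul_nonpos_of_nonneg_of_nonpos (hρ v hv').le (sin_nonpos_of_nonpos_of_neg_pi_le
        (by linarith [(hη v hv').2, (hη b hb).1]) (by linarith [hmin v hv', hω.2]))
  · obtain rfl | hne := eq_or_ne v u
    · simp
    · have hv' : v ∈ V \ {u} := ⟨hv, hne⟩
      rw [add_sub_cancel_right, hvu v hv', side_polar]
      exact mul_nonneg (hρ v hv').le (sin_nonneg_of_nonneg_of_le_pi (by linarith [hmin v hv'])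
        (by linarith [(hη v hv').2, (hη b hb).1, hω.2]))

theorem IsArcChain.dist_start_center (hω : ω ∈ Ioo 0 π) (hV : V.Finite) (hV₂ : V.Nontrivial)
    {m : ℕ} {c : Fin (m + 1) → ℂ} {r a δ : Fin (m + 1) → ℝ}
    (hchain : IsArcChain (cloud V ω) c r a δ) (hstart : circleMap (c 0) (r 0) (a 0) ∈ V)
    (hsum : ∑ i, δ i ≤ 2 * (π - ω)) (i : Fin (m + 1)) :
    dist (circleMap (c 0) (r 0) (a 0)) (c i) = r i := by
  obtain ⟨φ, hφ⟩ := hchain.circleMap_mem 0 (a 0) ⟨le_rfl, by linarith [hchain.extent_pos 0]⟩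
  obtain ⟨ψ, hψ⟩ := exists_isLastWedge hω hV hV₂ hstart hφ
  exact hψ.dist_center_of_isArcChain hω hV hchain le_rfl (by linarith) hψ.toIsWedge i

end Chain

section Reflection

variable {V : Set ℂ} {ω φ : ℝ} {x : ℂ}

lemma side_conj (φ : ℝ) (z : ℂ) : side φ (conj z) = -side (-φ) z := by
  simp only [side_apply, Complex.conj_re, Complex.conj_im, cos_neg, sin_neg]
  ring

lemma IsWedge.conj (h : IsWedge V ω φ x) : IsWedge (conj '' V) ω (ω - φ) (conj x) := by
  have hleft (v : ℂ) : side (ω - φ) (conj v - conj x) = -side (φ - ω) (v - x) := by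
    rw [← map_sub, side_conj, neg_sub]
  have hright (v : ℂ) : side (ω - φ - ω) (conj v - conj x) = -side φ (v - x) := by
    rw [← map_sub, side_conj, sub_sub_cancel_left, neg_neg]
  obtain ⟨p, hp, q, hq, hpx, hqx⟩ := h.touches
  refine ⟨?_, ?_, conj q, mem_image_of_mem _ hq, conj p, mem_image_of_mem _ hp, ?_, ?_⟩
  · rintro _ ⟨v, hv, rfl⟩
    rw [hleft, neg_nonpos]
    exact h.right v hv
  · rintro _ ⟨v, hv, rfl⟩
    rw [hright, neg_nonneg]
    exact h.left v hv
  · rw [hleft, hqx, neg_zero]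
  · rw [hright, hpx, neg_zero]

lemma conj_mem_cloud (h : x ∈ cloud V ω) : conj x ∈ cloud (conj '' V) ω :=
  let ⟨_, hφ⟩ := h
  ⟨_, hφ.conj⟩

end Reflection

section ConvexHull

lemma exists_mem_eq_of_mem_convexHull {E : Type*} [AddCommGroup E] [Module ℝ E] {V : Set E}
    {f : E →ₗ[ℝ] ℝ} {c : ℝ} {y : E} (hf : ∀ v ∈ V, f v ≤ c) (hy : y ∈ convexHull ℝ V)
    (hyc : f y = c) : ∃ v ∈ V, f v = c := by
  obtain ⟨v, hv, hle⟩ := (f.convexOn convex_univ).exists_ge_of_mem_convexHull (subset_univ V) hy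
  exact ⟨v, hv, (hf v hv).antisymm (hyc ▸ hle)⟩

lemma IsWedge.of_convexHull {V : Set ℂ} {ω φ : ℝ} {x : ℂ}
    (h : IsWedge (convexHull ℝ V) ω φ x) : IsWedge V ω φ x := by
  have hleft : ∀ v ∈ V, side φ (v - x) ≤ 0 := fun v hv => h.left v (subset_convexHull ℝ V hv)
  have hright : ∀ v ∈ V, 0 ≤ side (φ - ω) (v - x) := fun v hv =>
    h.right v (subset_convexHull ℝ V hv)
  obtain ⟨p, hp, q, hq, hpx, hqx⟩ := h.touches
  refine ⟨hleft, hright, ?_⟩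
  simp only [Touches, map_sub, sub_nonpos, sub_nonneg, sub_eq_zero] at hleft hright hpx hqx ⊢
  obtain ⟨p', hp', hpx'⟩ := exists_mem_eq_of_mem_convexHull hleft hp hpx
  obtain ⟨q', hq', hqx'⟩ := exists_mem_eq_of_mem_convexHull (f := -side (φ - ω))
    (fun v hv => neg_le_neg (hright v hv)) hq (congrArg Neg.neg hqx)
  exact ⟨p', hp', q', hq', hpx', neg_injective hqx'⟩

lemma cloud_convexHull_subset {V : Set ℂ} {ω : ℝ} : cloud (convexHull ℝ V) ω ⊆ cloud V ω :=
  fun _ ⟨φ, hφ⟩ => ⟨φ, hφ.of_convexHull⟩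

end ConvexHull

section Plane

/-- The identification of the plane with the complex numbers. -/
def toComplex : Plane ≃ₗᵢ[ℝ] ℂ := Complex.orthonormalBasisOneI.repr.symm

lemma toComplex_unitVec (θ : ℝ) : toComplex (unitVec θ) = Complex.exp (θ * Complex.I) := by
  simp [toComplex, unitVec, Complex.exp_mul_I]

lemma toComplex_center_add (A : CircArc) (θ : ℝ) :
    toComplex (A.center + A.radius • unitVec θ) = circleMap (toComplex A.center) A.radius θ := by
  rw [map_add, map_smul, toComplex_unitVec, circleMap, Complex.real_smul]

lemma exists_exp_eq_of_angle_eq {z w : ℂ} {ω : ℝ} (hz : ‖z‖ = 1) (hw : ‖w‖ = 1)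
    (hzw : InnerProductGeometry.angle z w = ω) :
    ∃ φ : ℝ, z = Complex.exp (φ * Complex.I) ∧ w = Complex.exp ((φ - ω : ℝ) * Complex.I) ∨
      w = Complex.exp (φ * Complex.I) ∧ z = Complex.exp ((φ - ω : ℝ) * Complex.I) := by
  obtain ⟨a, rfl⟩ := (Complex.norm_eq_one_iff z).mp hz
  obtain ⟨b, rfl⟩ := (Complex.norm_eq_one_iff w).mp hw
  rw [Complex.angle_exp_exp] at hzw
  have hturn (n : ℤ) (c : ℝ) :
      Complex.exp (c * Complex.I) = Complex.exp ((c + n * (2 * π) : ℝ) * Complex.I) := by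
    rw [Complex.exp_eq_exp_iff_exists_int]
    exact ⟨-n, by push_cast; ring⟩
  have hmod := toIocMod_add_toIocDiv_zsmul two_pi_pos (-π) (a - b)
  rw [zsmul_eq_mul] at hmod
  set n := toIocDiv two_pi_pos (-π) (a - b)
  obtain hω | hω := eq_or_eq_neg_of_abs_eq hzw
  · refine ⟨a, .inl ⟨rfl, (hturn n b).trans ?_⟩⟩
    rw [show b + n * (2 * π) = a - ω by linarith]
  · refine ⟨b, .inr ⟨rfl, (hturn (-n) a).trans ?_⟩⟩
    rw [show a + (-n : ℤ) * (2 * π) = b - ω by push_cast; linarith]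

lemma isMinWedge_swap {P : Set Plane} {ω : ℝ} {x d₁ d₂ : Plane} (h : IsMinWedge P ω x d₁ d₂) :
    IsMinWedge P ω x d₂ d₁ := by
  obtain ⟨hd₁, hd₂, hangle, hP, htouch₁, htouch₂⟩ := h
  refine ⟨hd₂, hd₁, by rwa [InnerProductGeometry.angle_comm], fun y hy => ?_, htouch₂, htouch₁⟩
  obtain ⟨s, t, hs, ht, rfl⟩ := hP hy
  exact ⟨t, s, ht, hs, add_right_comm _ _ _⟩

lemma isWedge_of_isMinWedge {P : Set Plane} {ω φ : ℝ} {x d₁ d₂ : Plane}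
    (h : IsMinWedge P ω x d₁ d₂) (hd₁ : toComplex d₁ = Complex.exp (φ * Complex.I))
    (hd₂ : toComplex d₂ = Complex.exp ((φ - ω : ℝ) * Complex.I)) :
    IsWedge (toComplex '' P) ω φ (toComplex x) := by
  obtain ⟨-, -, hangle, hP, ⟨p, hp, s, -, hps⟩, q, hq, t, -, hqt⟩ := h
  have hside (s t η : ℝ) : side η (toComplex (x + s • d₁ + t • d₂) - toComplex x) =
      s * sin (φ - η) + t * sin (φ - ω - η) := by
    rw [← map_sub, add_assoc, add_sub_cancel_left, map_add, map_smul, map_smul, hd₁, hd₂,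
      Complex.real_smul, Complex.real_smul, map_add, side_polar, side_polar]
  have hsin : 0 ≤ sin ω := hangle ▸ InnerProductGeometry.sin_angle_nonneg d₁ d₂
  refine ⟨?_, ?_, _, mem_image_of_mem _ hp, _, mem_image_of_mem _ hq, ?_, ?_⟩
  · rintro _ ⟨y, hy, rfl⟩
    obtain ⟨s, t, -, ht, rfl⟩ := hP hy
    rw [hside, sub_self, sin_zero, mul_zero, zero_add, sub_sub_cancel_left, sin_neg, mul_neg]
    exact neg_nonpos.mpr (mul_nonneg ht hsin)
  · rintro _ ⟨y, hy, rfl⟩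
    obtain ⟨s, t, hs, -, rfl⟩ := hP hy
    rw [hside, sub_self, sin_zero, mul_zero, add_zero, sub_sub_cancel]
    exact mul_nonneg hs hsin
  · simpa [hps] using hside s 0 φ
  · simpa [hqt] using hside 0 t (φ - ω)

lemma toComplex_mem_cloud {P : Set Plane} {ω : ℝ} {x : Plane} (hx : x ∈ omegaCloud P ω) :
    toComplex x ∈ cloud (toComplex '' P) ω := by
  obtain ⟨d₁, d₂, h⟩ := hx
  obtain ⟨φ, ⟨hd₁, hd₂⟩ | ⟨hd₂, hd₁⟩⟩ := exists_exp_eq_of_angle_eq (ω := ω)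
    (z := toComplex d₁) (w := toComplex d₂) ((toComplex.norm_map d₁).trans h.1)
    ((toComplex.norm_map d₂).trans h.2.1)
    ((toComplex.toLinearIsometry.angle_map d₁ d₂).trans h.2.2.1)
  · exact ⟨φ, isWedge_of_isMinWedge h hd₁ hd₂⟩
  · exact ⟨φ, isWedge_of_isMinWedge (isMinWedge_swap h) hd₂ hd₁⟩

lemma toComplex_mem_cloud_of_convexHull {V : Set Plane} {ω : ℝ} {x : Plane}
    (hx : x ∈ omegaCloud (convexHull ℝ V) ω) : toComplex x ∈ cloud (toComplex '' V) ω := by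
  refine cloud_convexHull_subset ?_
  have himage := (toComplex : Plane →ₗ[ℝ] ℂ).image_convexHull V
  exact himage ▸ toComplex_mem_cloud hx

end Plane

section ClockwiseChain

/-- The circular arcs `A i` form a clockwise chain inside `S`: each arc, traversed clockwise, ends
where the next one starts. -/
structure IsClockwiseChain (S : Set Plane) {m : ℕ} (A : Fin (m + 1) → CircArc) : Prop where
  radius_pos : ∀ i, 0 < (A i).radius
  delta_pos : ∀ i, 0 < (A i).delta
  points_subset : ∀ i, (A i).points ⊆ S
  cwEnd_eq_cwStart : ∀ i : Fin m, (A i.castSucc).cwEnd = (A i.succ).cwStart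

variable {V : Set Plane} {ω : ℝ} {m : ℕ} {A : Fin (m + 1) → CircArc}

lemma IsClockwiseChain.circleMap_mem_cloud
    (h : IsClockwiseChain (omegaCloud (convexHull ℝ V) ω) A) (i : Fin (m + 1)) {θ : ℝ}
    (hθ : θ ∈ Icc (A i).start ((A i).start + (A i).delta)) :
    circleMap (toComplex (A i).center) (A i).radius θ ∈ cloud (toComplex '' V) ω := by
  rw [← toComplex_center_add]
  exact toComplex_mem_cloud_of_convexHull (h.points_subset i ⟨θ, hθ, rfl⟩)

lemma IsClockwiseChain.isArcChain_rev
    (h : IsClockwiseChain (omegaCloud (convexHull ℝ V) ω) A) :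
    IsArcChain (cloud (toComplex '' V) ω) (fun i => toComplex (A i.rev).center)
      (fun i => (A i.rev).radius) (fun i => (A i.rev).start) (fun i => (A i.rev).delta) where
  radius_pos i := h.radius_pos i.rev
  extent_pos i := h.delta_pos i.rev
  circleMap_mem i _ hθ := h.circleMap_mem_cloud i.rev hθ
  end_eq_start i := by
    rw [← toComplex_center_add, ← toComplex_center_add, Fin.rev_castSucc, Fin.rev_succ]
    exact congrArg toComplex (h.cwEnd_eq_cwStart i.rev).symm

lemma conj_toComplex_center_add (A : CircArc) (θ : ℝ) :
    conj (toComplex (A.center + A.radius • unitVec θ)) =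
      circleMap (conj (toComplex A.center)) A.radius (-θ) := by
  rw [toComplex_center_add, conj_circleMap]

lemma IsClockwiseChain.isArcChain_conj
    (h : IsClockwiseChain (omegaCloud (convexHull ℝ V) ω) A) :
    IsArcChain (cloud (conj '' (toComplex '' V)) ω) (fun i => conj (toComplex (A i).center))
      (fun i => (A i).radius) (fun i => -((A i).start + (A i).delta)) (fun i => (A i).delta) where
  radius_pos := h.radius_pos
  extent_pos := h.delta_pos
  circleMap_mem i θ hθ := by
    have hmem := h.circleMap_mem_cloud i (θ := -θ)
      ⟨by linarith [hθ.2], by linarith [hθ.1]⟩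
    simpa only [← toComplex_center_add, conj_toComplex_center_add, neg_neg] using
      conj_mem_cloud hmem
  end_eq_start i := by
    have hjoin := congrArg (conj ∘ toComplex) (h.cwEnd_eq_cwStart i)
    simp only [Function.comp_apply, CircArc.cwEnd, CircArc.cwStart,
      conj_toComplex_center_add] at hjoin
    rw [← hjoin]
    congr 1
    ring

theorem IsClockwiseChain.dist_cwEnd_last_center (hω : ω ∈ Ioo 0 π) (hV : V.Finite)
    (hV₂ : V.Nontrivial) (h : IsClockwiseChain (omegaCloud (convexHull ℝ V) ω) A)
    (hend : (A (Fin.last m)).cwEnd ∈ V) (hsum : ∑ i, (A i).delta ≤ 2 * (π - ω))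
    (i : Fin (m + 1)) : dist (A (Fin.last m)).cwEnd (A i).center = (A i).radius := by
  have hsum_rev : ∑ i : Fin (m + 1), (A i.rev).delta ≤ 2 * (π - ω) :=
    (Equiv.sum_comp Fin.revPerm fun i => (A i).delta).trans_le hsum
  have hdist := h.isArcChain_rev.dist_start_center hω (hV.image _)
    (hV₂.image toComplex.injective)
    (by rw [← toComplex_center_add, Fin.rev_zero]; exact mem_image_of_mem _ hend) hsum_rev i.rev
  rwa [← toComplex_center_add, Fin.rev_zero, Fin.rev_rev, toComplex.dist_map] at hdist

theorem IsClockwiseChain.dist_cwStart_zero_center (hω : ω ∈ Ioo 0 π) (hV : V.Finite)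
    (hV₂ : V.Nontrivial) (h : IsClockwiseChain (omegaCloud (convexHull ℝ V) ω) A)
    (hstart : (A 0).cwStart ∈ V) (hsum : ∑ i, (A i).delta ≤ 2 * (π - ω)) (i : Fin (m + 1)) :
    dist (A 0).cwStart (A i).center = (A i).radius := by
  have hdist := h.isArcChain_conj.dist_start_center hω
    ((hV.image _).image _) ((hV₂.image toComplex.injective).image (star_injective (R := ℂ)))
    (by rw [← conj_toComplex_center_add]
        exact mem_image_of_mem _ (mem_image_of_mem _ hstart)) hsum i
  rwa [← conj_toComplex_center_add, Complex.dist_conj_conj, toComplex.dist_map] at hdist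

end ClockwiseChain

end OmegaWedge

open OmegaWedge in
theorem stmt_10_general (V : Set Plane) (hV : V.Finite) (hV₂ : V.Nontrivial) (ω : ℝ)
    (hω : ω ∈ Ioo 0 π) (u : Plane) (hu : u ∈ V) (m₁ m₂ : ℕ)
    (arcs₁ : Fin (m₁ + 1) → CircArc) (arcs₂ : Fin (m₂ + 1) → CircArc)
    (hchain₁ : IsClockwiseChain (omegaCloud (convexHull ℝ V) ω) arcs₁)
    (hchain₂ : IsClockwiseChain (omegaCloud (convexHull ℝ V) ω) arcs₂)
    (hend₁ : (arcs₁ (Fin.last m₁)).cwEnd = u) (hstart₂ : (arcs₂ 0).cwStart = u)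
    (hsum₁ : ∑ i, (arcs₁ i).delta ≤ 2 * (π - ω)) (hsum₂ : ∑ i, (arcs₂ i).delta ≤ 2 * (π - ω)) :
    (∀ i, dist u (arcs₁ i).center = (arcs₁ i).radius) ∧
    (∀ i, dist u (arcs₂ i).center = (arcs₂ i).radius) :=
  ⟨fun i => hend₁ ▸ hchain₁.dist_cwEnd_last_center hω hV hV₂ (hend₁ ▸ hu) hsum₁ i,
    fun i => hstart₂ ▸ hchain₂.dist_cwStart_zero_center hω hV hV₂ (hstart₂ ▸ hu) hsum₂ i⟩

/-- Let `u` be a narrow vertex (narrow pivot) of the `ω`-cloud, and let the portions of the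
cloud ending at `u` (from `v`) and starting at `u` (to `w`), each of total angular measure
`2(π - ω)`, be given as clockwise chains of arcs. Then the supporting circle of every arc of
these portions passes through `u`. -/
theorem stmt_10 (V : Finset Plane) (hV : IsConvexPolygon V) (ω : ℝ) (hω : ω ∈ Set.Ioo 0 π)
    (u : Plane) (hu : u ∈ V)
    (hnarrow : interiorAngle (convexHull ℝ (V : Set Plane)) u ≤ ω)
    (huΩ : u ∈ omegaCloud (convexHull ℝ (V : Set Plane)) ω)
    (m₁ m₂ : ℕ) (arcs₁ : Fin (m₁ + 1) → CircArc) (arcs₂ : Fin (m₂ + 1) → CircArc)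
    (hprop₁ : ∀ i, 0 < (arcs₁ i).radius ∧ 0 < (arcs₁ i).delta)
    (hprop₂ : ∀ i, 0 < (arcs₂ i).radius ∧ 0 < (arcs₂ i).delta)
    (hsub₁ : ∀ i, (arcs₁ i).points ⊆ omegaCloud (convexHull ℝ (V : Set Plane)) ω)
    (hsub₂ : ∀ i, (arcs₂ i).points ⊆ omegaCloud (convexHull ℝ (V : Set Plane)) ω)
    (hchain₁ : ∀ i : Fin m₁, (arcs₁ i.castSucc).cwEnd = (arcs₁ i.succ).cwStart)
    (hchain₂ : ∀ i : Fin m₂, (arcs₂ i.castSucc).cwEnd = (arcs₂ i.succ).cwStart)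
    (hend₁ : (arcs₁ (Fin.last m₁)).cwEnd = u)
    (hstart₂ : (arcs₂ 0).cwStart = u)
    (hdisj₁ : ∀ i j, i ≠ j → Disjoint (arcs₁ i).intPoints (arcs₁ j).intPoints)
    (hdisj₂ : ∀ i j, i ≠ j → Disjoint (arcs₂ i).intPoints (arcs₂ j).intPoints)
    (hdisj₁₂ : ∀ i j, Disjoint (arcs₁ i).intPoints (arcs₂ j).intPoints)
    (hsum₁ : ∑ i, (arcs₁ i).delta = 2 * (π - ω))
    (hsum₂ : ∑ i, (arcs₂ i).delta = 2 * (π - ω)) :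
    (∀ i, dist u (arcs₁ i).center = (arcs₁ i).radius) ∧
    (∀ i, dist u (arcs₂ i).center = (arcs₂ i).radius) := by
  exact stmt_10_general V V.finite_toSet (Finset.one_lt_card_iff_nontrivial.mp (by linarith [hV.1]))
    ω hω u hu m₁ m₂ arcs₁ arcs₂
    ⟨fun i => (hprop₁ i).1, fun i => (hprop₁ i).2, hsub₁, hchain₁⟩
    ⟨fun i => (hprop₂ i).1, fun i => (hprop₂ i).2, hsub₂, hchain₂⟩ hend₁ hstart₂ hsum₁.le hsum₂.le

end
end
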